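/- ℙ-almost surely the following hold: if d ≥ 2 then ∫₀^∞ P^ω₀(X_t = 0) dt < ∞ (the walk X is transient); if d = 1 and α < 1 then ∫₀^∞ P^ω₀(X_t = 0) dt < ∞ (transient); and if d = 1 and 𝔼[z(0)] < ∞ then ∫₀^∞ P^ω₀(X_t = 0) dt = ∞ (the walk X is recurrent). -/

import Mathlib

open MeasureTheory ProbabilityTheory Filter Set

noncomputable section

/-- `n`-step transition probabilities of the discrete-time simple random walk on `ℤ^m`. -/
def srwKernel (m : ℕ) : ℕ → (Fin m → ℤ) → (Fin m → ℤ) → ℝ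
  | 0, x, y => if x = y then 1 else 0
  | n + 1, x, y =>
      (∑ i : Fin m, (srwKernel m n (Function.update x i (x i + 1)) y
        + srwKernel m n (Function.update x i (x i - 1)) y)) / (2 * m)

/-- Transition kernel of the continuous-time simple random walk on `ℤ^m` which jumps to
each of its `2m` nearest neighbours at rate `1` (total jump rate `2m`). -/
def heatKernel (m : ℕ) (t : ℝ) (x y : Fin m → ℤ) : ℝ :=
  ∑' n : ℕ, Real.exp (-(2 * m) * t) * ((2 * m) * t) ^ n / n.factorial * srwKernel m n x y

/-- `(P, S)` is (a realization of) the continuous-time simple random walk on `ℤ^m`: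
under `P x` the process `S` starts at `x`, has right-continuous (piecewise constant)
paths, and its finite-dimensional distributions are given by the heat kernel. -/
structure IsCTSRW (m : ℕ) {Ω : Type*} [MeasurableSpace Ω]
    (P : (Fin m → ℤ) → Measure Ω) (S : ℝ → Ω → (Fin m → ℤ)) : Prop where
  prob : ∀ x, IsProbabilityMeasure (P x)
  meas : Measurable fun p : ℝ × Ω => S p.1 p.2
  start : ∀ x, ∀ᵐ ω ∂ P x, S 0 ω = x
  rightCont : ∀ x, ∀ᵐ ω ∂ P x, ∀ t : ℝ, 0 ≤ t →
    ∃ ε > (0 : ℝ), ∀ u, t ≤ u → u < t + ε → S u ω = S t ω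
  fdd : ∀ x (n : ℕ) (t : Fin (n + 1) → ℝ), 0 ≤ t 0 →
    (∀ i : Fin n, t i.castSucc ≤ t i.succ) →
    ∀ y : Fin (n + 1) → (Fin m → ℤ),
      (P x {ω | ∀ i, S (t i) ω = y i}).toReal
        = heatKernel m (t 0) x (y 0)
          * ∏ i : Fin n, heatKernel m (t i.succ - t i.castSucc) (y i.castSucc) (y i.succ)

/-- `z` is an i.i.d. nonnegative random scenery on `ℤ^d` whose common upper tail decays
like `r^{-α+o(1)}`. -/
structure IsScenery (d : ℕ) (α : ℝ) {Ω : Type*} [MeasurableSpace Ω]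
    (μ : Measure Ω) (z : (Fin d → ℤ) → Ω → ℝ) : Prop where
  prob : IsProbabilityMeasure μ
  meas : ∀ x, Measurable (z x)
  nonneg : ∀ x ω, 0 ≤ z x ω
  indep : iIndepFun z μ
  ident : ∀ x, IdentDistrib (z x) (z 0) μ μ
  tail : Tendsto (fun r : ℝ => Real.log (μ {ω | r < z 0 ω}).toReal / Real.log r)
    atTop (nhds (-α))

/-- The random walk in random scenery `A(t) = ∫₀ᵗ z(S_u) du`. -/
def rwrs {Ωz Ωw : Type*} (d : ℕ) (z : (Fin d → ℤ) → Ωz → ℝ)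
    (S : ℝ → Ωw → (Fin d → ℤ)) (t : ℝ) (ζ : Ωz) (ω : Ωw) : ℝ :=
  ∫ u in Set.Ioc (0 : ℝ) t, z (S u ω) ζ

end
open MeasureTheory ProbabilityTheory Filter Set

noncomputable section

/-- The clock process `A²(t) = ∫₀ᵗ z(S²_u) du`, where `S²` is the second (ℤ^d-valued)
component of the walk on `ℤ^{1+d}`. -/
def clock (d : ℕ) {Ωz Ωw : Type*} (z : (Fin d → ℤ) → Ωz → ℝ)
    (S : ℝ → Ωw → (Fin (d + 1) → ℤ)) (t : ℝ) (ζ : Ωz) (ω : Ωw) : ℝ :=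
  ∫ u in Set.Ioc (0 : ℝ) t, z (fun i => S u ω i.succ) ζ

/-- The variable-speed random walk `X_t = (S¹_{A²(t)}, S²_t)` in the layered conductance
field `ω(x, x±e₁) = z(x₂)`, `ω(x, x±e_i) = 1` for `i ≥ 2` (coordinate `0` of the walk on
`ℤ^{1+d}` is the ℤ-coordinate, coordinates `1,…,d` form the ℤ^d-coordinate). -/
def layeredWalk (d : ℕ) {Ωz Ωw : Type*} (z : (Fin d → ℤ) → Ωz → ℝ)
    (S : ℝ → Ωw → (Fin (d + 1) → ℤ)) (t : ℝ) (ζ : Ωz) (ω : Ωw) : ℤ × (Fin d → ℤ) :=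
  (S (clock d z S t ζ ω) ω 0, fun i => S t ω i.succ)

/-- Euclidean norm of a point of `ℤ^{1+d} = ℤ × ℤ^d`. -/
def euclNormProd (d : ℕ) (x : ℤ × (Fin d → ℤ)) : ℝ :=
  Real.sqrt ((x.1 : ℝ) ^ 2 + ∑ i, (x.2 i : ℝ) ^ 2)

end

section
open MeasureTheory ProbabilityTheory Filter Set

/-- uniform probability on the circle -/
noncomputable def nuC : Measure ℝ :=
  (ENNReal.ofReal (2 * Real.pi))⁻¹ • (volume.restrict (Ioc (-Real.pi) Real.pi))

instance : IsProbabilityMeasure nuC := by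
  constructor
  simp only [nuC, Measure.smul_apply, smul_eq_mul, Measure.restrict_apply_univ, Real.volume_Ioc]
  rw [show Real.pi - -Real.pi = 2 * Real.pi by ring]
  apply ENNReal.inv_mul_cancel
  · simp [Real.pi_pos]
  · exact ENNReal.ofReal_ne_top

lemma integral_nuC (f : ℝ → ℝ) :
    ∫ θ, f θ ∂nuC = (2 * Real.pi)⁻¹ * ∫ θ in (-Real.pi)..Real.pi, f θ := by
  rw [nuC, integral_smul_measure, intervalIntegral.integral_of_le (by linarith [Real.pi_pos])]
  simp [ENNReal.toReal_inv, Real.pi_pos.le]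

lemma integral_cos_nuC (a : ℤ) : ∫ θ, Real.cos (a * θ) ∂nuC = if a = 0 then 1 else 0 := by
  rw [integral_nuC]
  split_ifs with h
  · subst h
    simp
    field_simp
    norm_num
  · have ha : (a : ℝ) ≠ 0 := by exact_mod_cast h
    rw [intervalIntegral.integral_comp_mul_left (fun x => Real.cos x) ha]
    simp [integral_cos, Real.sin_int_mul_pi]

/-- the one-dimensional heat kernel, in Fourier representation -/
noncomputable def kk (t : ℝ) (a : ℤ) : ℝ :=
  ∫ θ, Real.exp (-(2 * t * (1 - Real.cos θ))) * Real.cos (a * θ) ∂nuC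

lemma prod_update_cos {m : ℕ} (i : Fin m) (x y : Fin m → ℤ) (θ : Fin m → ℝ) :
    (∏ j, Real.cos (((y j - Function.update x i (x i + 1) j : ℤ) : ℝ) * θ j))
    + (∏ j, Real.cos (((y j - Function.update x i (x i - 1) j : ℤ) : ℝ) * θ j))
    = 2 * Real.cos (θ i) * ∏ j, Real.cos (((y j - x j : ℤ) : ℝ) * θ j) := by
  rw [← Finset.mul_prod_erase Finset.univ _ (Finset.mem_univ i),
    ← Finset.mul_prod_erase Finset.univ _ (Finset.mem_univ i),
    ← Finset.mul_prod_erase Finset.univ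
      (fun j => Real.cos (((y j - x j : ℤ) : ℝ) * θ j)) (Finset.mem_univ i)]
  have h : ∀ v : ℤ, ∏ j ∈ Finset.univ.erase i,
      Real.cos (((y j - Function.update x i v j : ℤ) : ℝ) * θ j)
      = ∏ j ∈ Finset.univ.erase i, Real.cos (((y j - x j : ℤ) : ℝ) * θ j) := by
    intro v
    apply Finset.prod_congr rfl
    intro j hj
    rw [Function.update_of_ne (Finset.ne_of_mem_erase hj)]
  rw [h, h, ← add_mul, ← mul_assoc]
  congr 1
  simp only [Function.update_self]
  push_cast
  rw [show ((y i : ℝ) - (x i + 1)) * θ i = (y i - x i) * θ i - θ i by ring,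
    show ((y i : ℝ) - (x i - 1)) * θ i = (y i - x i) * θ i + θ i by ring,
    Real.cos_sub, Real.cos_add]
  ring

lemma abs_avg_cos_le {m : ℕ} (hm : 1 ≤ m) (θ : Fin m → ℝ) :
    |(∑ i, Real.cos (θ i)) / m| ≤ 1 := by
  have hm' : (0 : ℝ) < m := by exact_mod_cast hm
  rw [abs_div, abs_of_pos hm', div_le_one hm']
  refine (Finset.abs_sum_le_sum_abs _ _).trans ?_
  refine (Finset.sum_le_sum (fun i _ => Real.abs_cos_le_one _)).trans ?_
  simp

lemma abs_prod_cos_le {m : ℕ} (c θ : Fin m → ℝ) : |∏ j, Real.cos (c j * θ j)| ≤ 1 := by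
  rw [Finset.abs_prod]
  exact Finset.prod_le_one (fun _ _ => abs_nonneg _) (fun _ _ => Real.abs_cos_le_one _)

lemma integrable_srw {m : ℕ} (hm : 1 ≤ m) (n : ℕ) (c : Fin m → ℝ) :
    Integrable (fun θ : Fin m → ℝ => ((∑ i, Real.cos (θ i)) / m) ^ n
      * ∏ j, Real.cos (c j * θ j)) (Measure.pi fun _ => nuC) := by
  refine Integrable.of_bound (C := 1) ?_ (ae_of_all _ fun θ => ?_)
  · apply Continuous.aestronglyMeasurable
    fun_prop
  · rw [Real.norm_eq_abs, abs_mul, abs_pow]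
    exact mul_le_one₀ (pow_le_one₀ (abs_nonneg _) (abs_avg_cos_le hm θ)) (abs_nonneg _)
      (abs_prod_cos_le _ _)

lemma srw_fourier {m : ℕ} (hm : 1 ≤ m) (n : ℕ) (x y : Fin m → ℤ) :
    srwKernel m n x y = ∫ θ : Fin m → ℝ, ((∑ i, Real.cos (θ i)) / m) ^ n
      * ∏ j, Real.cos (((y j - x j : ℤ) : ℝ) * θ j) ∂(Measure.pi fun _ => nuC) := by
  have hm' : (0 : ℝ) < m := by exact_mod_cast hm
  induction n generalizing x with
  | zero =>
    simp only [srwKernel, pow_zero, one_mul]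
    rw [integral_fintype_prod_eq_prod (f := fun j (s : ℝ) => Real.cos (((y j - x j : ℤ) : ℝ) * s))]
    simp only [integral_cos_nuC]
    split_ifs with h
    · subst h; simp
    · obtain ⟨i, hi⟩ := Function.ne_iff.mp h
      symm
      apply Finset.prod_eq_zero (Finset.mem_univ i)
      rw [if_neg]
      intro h'; apply hi; omega
  | succ n ih =>
    simp only [srwKernel, ih]
    simp_rw [← integral_add (integrable_srw hm n _) (integrable_srw hm n _)]
    rw [← integral_finsetSum]
    swap
    · exact fun i _ => (integrable_srw hm n _).add (integrable_srw hm n _)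
    rw [← integral_div]
    congr 1
    ext θ
    simp_rw [← mul_add, prod_update_cos, ← Finset.mul_sum, ← Finset.sum_mul, ← Finset.mul_sum]
    rw [pow_succ]
    field_simp

lemma heat_fourier {m : ℕ} (hm : 1 ≤ m) (t : ℝ) (x y : Fin m → ℤ) :
    heatKernel m t x y = ∏ i, kk t (y i - x i) := by
  have hm' : (0 : ℝ) < m := by exact_mod_cast hm
  unfold heatKernel
  simp_rw [srw_fourier hm, ← integral_const_mul]
  have key : ∀ θ : Fin m → ℝ, HasSum (fun n : ℕ => Real.exp (-(2 * m) * t) * ((2 * m) * t) ^ n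
      / n.factorial * (((∑ i, Real.cos (θ i)) / m) ^ n
        * ∏ j, Real.cos (((y j - x j : ℤ) : ℝ) * θ j)))
      (∏ i, (Real.exp (-(2 * t * (1 - Real.cos (θ i)))) *
        Real.cos (((y i - x i : ℤ) : ℝ) * θ i))) := by
    intro θ
    have h1 := NormedSpace.expSeries_div_hasSum_exp
      ((2 * m * t) * ((∑ i, Real.cos (θ i)) / m) : ℝ)
    rw [← Real.exp_eq_exp_ℝ] at h1
    have h2 := (h1.mul_left (Real.exp (-(2 * m) * t))).mul_right
      (∏ j, Real.cos (((y j - x j : ℤ) : ℝ) * θ j))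
    convert h2 using 1
    · rfl
    · ext n; rw [mul_pow]; ring
    · rw [Finset.prod_mul_distrib, ← Real.exp_sum, ← Real.exp_add]
      congr 2
      rw [Finset.sum_neg_distrib, ← Finset.mul_sum, Finset.sum_sub_distrib]
      simp
      field_simp
      ring
  have hs : Summable fun n : ℕ => Real.exp (-(2 * m) * t) * |(2 * m) * t| ^ n / n.factorial := by
    simp_rw [mul_div_assoc]
    exact (Real.summable_pow_div_factorial _).mul_left _
  have := hasSum_integral_of_dominated_convergence (μ := Measure.pi fun _ : Fin m => nuC)
    (F := fun (n : ℕ) (θ : Fin m → ℝ) => Real.exp (-(2 * m) * t) * ((2 * m) * t) ^ n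
      / n.factorial * (((∑ i, Real.cos (θ i)) / m) ^ n
        * ∏ j, Real.cos (((y j - x j : ℤ) : ℝ) * θ j)))
    (bound := fun n _ => Real.exp (-(2 * m) * t) * |(2 * m) * t| ^ n / n.factorial)
    (fun n => by
      apply Continuous.aestronglyMeasurable
      fun_prop)
    (fun n => ae_of_all _ fun θ => by
      rw [Real.norm_eq_abs, abs_mul, abs_mul (_ ^ n), abs_div, abs_mul, abs_pow, Real.abs_exp,
        abs_pow, Nat.abs_cast]
      refine mul_le_of_le_one_right (by positivity) ?_
      exact mul_le_one₀ (pow_le_one₀ (abs_nonneg _) (abs_avg_cos_le hm θ)) (abs_nonneg _)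
        (abs_prod_cos_le _ _))
    (ae_of_all _ fun θ => hs)
    (by simp)
    (ae_of_all _ key)
  rw [this.tsum_eq]
  rw [integral_fintype_prod_eq_prod (f := fun i (s : ℝ) => Real.exp (-(2 * t * (1 - Real.cos s))) *
        Real.cos (((y i - x i : ℤ) : ℝ) * s))]
  rfl

end

section
open MeasureTheory ProbabilityTheory Filter Set
open scoped ENNReal

lemma srw_nonneg {m : ℕ} (n : ℕ) (x y : Fin m → ℤ) : 0 ≤ srwKernel m n x y := by
  induction n generalizing x with
  | zero => simp only [srwKernel]; split_ifs <;> norm_num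
  | succ n ih =>
    simp only [srwKernel]
    apply div_nonneg _ (by positivity)
    exact Finset.sum_nonneg fun i _ => add_nonneg (ih _) (ih _)

lemma srw_tsum_succ {m : ℕ} (hm : 1 ≤ m) (n : ℕ) (x : Fin m → ℤ) (W : (Fin m → ℤ) → ℝ≥0∞) :
    ∑' y, ENNReal.ofReal (srwKernel m (n + 1) x y) * W y =
    (∑ i : Fin m, (∑' y, ENNReal.ofReal (srwKernel m n (Function.update x i (x i + 1)) y) * W y
      + ∑' y, ENNReal.ofReal (srwKernel m n (Function.update x i (x i - 1)) y) * W y))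
      * (ENNReal.ofReal (2 * m))⁻¹ := by
  have hm' : (0 : ℝ) < 2 * m := by have : (0 : ℝ) < m := by exact_mod_cast hm
                                   positivity
  simp only [srwKernel]
  simp_rw [ENNReal.ofReal_div_of_pos hm', ENNReal.ofReal_sum_of_nonneg
    (fun i _ => add_nonneg (srw_nonneg _ _ _) (srw_nonneg _ _ _)),
    ENNReal.ofReal_add (srw_nonneg _ _ _) (srw_nonneg _ _ _)]
  simp_rw [← ENNReal.tsum_add]
  rw [← Summable.tsum_finsetSum (fun i _ => ENNReal.summable), ← ENNReal.tsum_mul_right]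
  congr 1
  ext y
  rw [div_eq_mul_inv, mul_assoc, mul_comm _ (W y), ← mul_assoc, Finset.sum_mul]
  simp_rw [add_mul]

lemma srw_tsum_one {m : ℕ} (hm : 1 ≤ m) (n : ℕ) (x : Fin m → ℤ) :
    ∑' y, ENNReal.ofReal (srwKernel m n x y) = 1 := by
  have hm' : (0 : ℝ) < 2 * m := by have : (0 : ℝ) < m := by exact_mod_cast hm
                                   positivity
  induction n generalizing x with
  | zero =>
    simp only [srwKernel]
    rw [tsum_eq_single x]
    · simp
    · intro y hy; simp [hy.symm]
  | succ n ih =>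
    have := srw_tsum_succ hm n x (fun _ => 1)
    simp only [mul_one, ih] at this
    rw [this]
    rw [Finset.sum_const, Finset.card_univ, Fintype.card_fin]
    rw [show m • (1 + 1 : ℝ≥0∞) = ENNReal.ofReal (2 * m) by
      rw [ENNReal.ofReal_mul (by norm_num)]; simp; rw [two_mul]]
    apply ENNReal.mul_inv_cancel
    · simp; omega
    · exact ENNReal.ofReal_ne_top

lemma srw_tsum_le {m : ℕ} (hm : 1 ≤ m) (n : ℕ) (x : Fin m → ℤ) (W : (Fin m → ℤ) → ℝ≥0∞)
    (c : ℝ≥0∞) (hW1 : ∀ x i, W (Function.update x i (x i + 1)) ≤ c * W x)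
    (hW2 : ∀ x i, W (Function.update x i (x i - 1)) ≤ c * W x) :
    ∑' y, ENNReal.ofReal (srwKernel m n x y) * W y ≤ c ^ n * W x := by
  induction n generalizing x with
  | zero =>
    simp only [srwKernel]
    rw [tsum_eq_single x]
    · simp
    · intro y hy; simp [hy.symm]
  | succ n ih =>
    rw [srw_tsum_succ hm n x W]
    have : ∀ i : Fin m, (∑' y, ENNReal.ofReal (srwKernel m n (Function.update x i (x i + 1)) y)
        * W y + ∑' y, ENNReal.ofReal (srwKernel m n (Function.update x i (x i - 1)) y) * W y)
        ≤ 2 * (c ^ (n + 1) * W x) := by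
      intro i
      rw [two_mul, pow_succ, mul_assoc]
      exact add_le_add ((ih _).trans (by gcongr; exact hW1 x i))
        ((ih _).trans (by gcongr; exact hW2 x i))
    refine (mul_le_mul_left (Finset.sum_le_sum fun i _ => this i) _).trans ?_
    rw [Finset.sum_const, Finset.card_univ, Fintype.card_fin, nsmul_eq_mul, ← mul_assoc]
    rw [show (m : ℝ≥0∞) * 2 = ENNReal.ofReal (2 * m) by
      rw [ENNReal.ofReal_mul (by norm_num)]; simp; rw [mul_comm]]
    rw [mul_comm, ← mul_assoc, ENNReal.inv_mul_cancel, one_mul]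
    · simp; omega
    · exact ENNReal.ofReal_ne_top

lemma heat_summand_nonneg {m : ℕ} {t : ℝ} (ht : 0 ≤ t) (x y : Fin m → ℤ) (n : ℕ) :
    0 ≤ Real.exp (-(2 * m) * t) * ((2 * m) * t) ^ n / n.factorial * srwKernel m n x y := by
  have := srw_nonneg n x y
  positivity

lemma srw_le_one {m : ℕ} (hm : 1 ≤ m) (n : ℕ) (x y : Fin m → ℤ) : srwKernel m n x y ≤ 1 := by
  have h := ENNReal.le_tsum (f := fun y => ENNReal.ofReal (srwKernel m n x y)) y
  rw [srw_tsum_one hm] at h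
  simpa using h

lemma heat_summable {m : ℕ} (hm : 1 ≤ m) {t : ℝ} (ht : 0 ≤ t) (x y : Fin m → ℤ) :
    Summable fun n : ℕ =>
      Real.exp (-(2 * m) * t) * ((2 * m) * t) ^ n / n.factorial * srwKernel m n x y := by
  refine Summable.of_nonneg_of_le (heat_summand_nonneg ht x y)
    (fun n => mul_le_of_le_one_right (by positivity) (srw_le_one hm n x y)) ?_
  simp_rw [mul_div_assoc]
  exact (Real.summable_pow_div_factorial _).mul_left _

lemma heat_nonneg {m : ℕ} {t : ℝ} (ht : 0 ≤ t) (x y : Fin m → ℤ) : 0 ≤ heatKernel m t x y :=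
  tsum_nonneg (heat_summand_nonneg ht x y)

lemma heat_tsum_eq {m : ℕ} (hm : 1 ≤ m) {t : ℝ} (ht : 0 ≤ t) (x : Fin m → ℤ)
    (W : (Fin m → ℤ) → ℝ≥0∞) :
    ∑' y, ENNReal.ofReal (heatKernel m t x y) * W y =
    ∑' n : ℕ, ENNReal.ofReal (Real.exp (-(2 * m) * t) * ((2 * m) * t) ^ n / n.factorial) *
      ∑' y, ENNReal.ofReal (srwKernel m n x y) * W y := by
  unfold heatKernel
  simp_rw [ENNReal.ofReal_tsum_of_nonneg (heat_summand_nonneg ht x _) (heat_summable hm ht x _),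
    ← ENNReal.tsum_mul_right, ← ENNReal.tsum_mul_left]
  rw [ENNReal.tsum_comm]
  congr 1; ext n; congr 1; ext y
  rw [ENNReal.ofReal_mul (by positivity), mul_assoc]

lemma poisson_hasSum (s c : ℝ) :
    HasSum (fun n : ℕ => Real.exp (-s) * s ^ n / n.factorial * c ^ n) (Real.exp (s * (c - 1))) := by
  have h1 := NormedSpace.expSeries_div_hasSum_exp (s * c)
  rw [← Real.exp_eq_exp_ℝ] at h1
  have h2 := h1.mul_left (Real.exp (-s))
  rw [← Real.exp_add] at h2
  convert h2 using 1
  · rfl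
  · ext n; rw [mul_pow]; ring
  · ring_nf

lemma poisson_tsum {s c : ℝ} (hs : 0 ≤ s) (hc : 0 ≤ c) :
    ∑' n : ℕ, ENNReal.ofReal (Real.exp (-s) * s ^ n / n.factorial) * ENNReal.ofReal c ^ n
      = ENNReal.ofReal (Real.exp (s * (c - 1))) := by
  rw [← (poisson_hasSum s c).tsum_eq, ENNReal.ofReal_tsum_of_nonneg (fun n => by positivity)
    (poisson_hasSum s c).summable]
  congr 1; ext n
  rw [ENNReal.ofReal_mul (by positivity), ENNReal.ofReal_pow hc]

lemma heat_tsum_one {m : ℕ} (hm : 1 ≤ m) {t : ℝ} (ht : 0 ≤ t) (x : Fin m → ℤ) :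
    ∑' y, ENNReal.ofReal (heatKernel m t x y) = 1 := by
  have h := heat_tsum_eq hm ht x (fun _ => 1)
  simp only [mul_one, srw_tsum_one hm] at h
  rw [h]
  have h2 := poisson_tsum (s := 2 * m * t) (c := 1) (by positivity) (by norm_num)
  simpa [neg_mul] using h2

lemma heat_tsum_le {m : ℕ} (hm : 1 ≤ m) {t : ℝ} (ht : 0 ≤ t) (x : Fin m → ℤ)
    (W : (Fin m → ℤ) → ℝ≥0∞) {c : ℝ} (hc : 0 ≤ c)
    (hW1 : ∀ x i, W (Function.update x i (x i + 1)) ≤ ENNReal.ofReal c * W x)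
    (hW2 : ∀ x i, W (Function.update x i (x i - 1)) ≤ ENNReal.ofReal c * W x) :
    ∑' y, ENNReal.ofReal (heatKernel m t x y) * W y
      ≤ ENNReal.ofReal (Real.exp (2 * m * t * (c - 1))) * W x := by
  rw [heat_tsum_eq hm ht, ← poisson_tsum (by positivity) hc, ← ENNReal.tsum_mul_right]
  refine ENNReal.tsum_le_tsum fun n => ?_
  rw [neg_mul, mul_assoc (ENNReal.ofReal _)]
  gcongr
  exact srw_tsum_le hm n x W _ hW1 hW2

/-! ### one-dimensional kernel -/

lemma heat_one (t : ℝ) (a : ℤ) : heatKernel 1 t 0 (fun _ => a) = kk t a := by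
  rw [heat_fourier le_rfl]; simp

lemma kk_nonneg {t : ℝ} (ht : 0 ≤ t) (a : ℤ) : 0 ≤ kk t a := by
  rw [← heat_one]; exact heat_nonneg ht _ _

lemma kk_tsum {t : ℝ} (ht : 0 ≤ t) : ∑' a, ENNReal.ofReal (kk t a) = 1 := by
  rw [← heat_tsum_one le_rfl ht 0, ← (Equiv.funUnique (Fin 1) ℤ).symm.tsum_eq]
  congr 1; ext a
  rw [← heat_one]; rfl

lemma kk_tsum_sub {t : ℝ} (ht : 0 ≤ t) (b : ℤ) : ∑' a, ENNReal.ofReal (kk t (a - b)) = 1 := by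
  rw [← kk_tsum ht, ← (Equiv.subRight b).tsum_eq (fun a => ENNReal.ofReal (kk t a))]
  rfl

/-- return probability -/
noncomputable def qq (t : ℝ) : ℝ := ∫ θ, Real.exp (-(2 * t * (1 - Real.cos θ))) ∂nuC

lemma kk_zero (t : ℝ) : kk t 0 = qq t := by simp [kk, qq]

lemma integrable_qq {t : ℝ} (ht : 0 ≤ t) :
    Integrable (fun θ => Real.exp (-(2 * t * (1 - Real.cos θ)))) nuC := by
  refine Integrable.of_bound (C := 1) (by fun_prop) (ae_of_all _ fun θ => ?_)
  rw [Real.norm_eq_abs, Real.abs_exp, Real.exp_le_one_iff]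
  have := Real.cos_le_one θ
  have : 0 ≤ t * (1 - Real.cos θ) := mul_nonneg ht (by linarith)
  linarith

lemma qq_anti {s t : ℝ} (hs : 0 ≤ s) (hst : s ≤ t) : qq t ≤ qq s := by
  refine integral_mono (integrable_qq (hs.trans hst)) (integrable_qq hs) fun θ => ?_
  have := Real.cos_le_one θ
  have : s * (1 - Real.cos θ) ≤ t * (1 - Real.cos θ) := by
    apply mul_le_mul_of_nonneg_right hst; linarith
  apply Real.exp_le_exp.mpr
  linarith

lemma qq_nonneg (t : ℝ) : 0 ≤ qq t := integral_nonneg fun _ => (Real.exp_pos _).le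

lemma qq_le_one {t : ℝ} (ht : 0 ≤ t) : qq t ≤ 1 := by
  have := qq_anti le_rfl ht
  simpa [qq] using this

lemma qq_continuousOn : ContinuousOn qq (Ici 0) := by
  intro s hs
  refine continuousWithinAt_of_dominated (bound := fun _ => 1) ?_ ?_ (by simp) ?_
  · exact Eventually.of_forall fun t => by fun_prop
  · filter_upwards [self_mem_nhdsWithin] with t ht
    refine ae_of_all _ fun θ => ?_
    rw [Real.norm_eq_abs, Real.abs_exp, Real.exp_le_one_iff]
    have := Real.cos_le_one θ
    have : 0 ≤ t * (1 - Real.cos θ) := mul_nonneg ht (by linarith)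
    linarith
  · refine ae_of_all _ fun θ => ?_
    fun_prop

lemma qq_le_gauss {t : ℝ} (ht : 0 ≤ t) :
    qq t ≤ (2 * Real.pi)⁻¹ * ∫ θ in (-Real.pi)..Real.pi, Real.exp (-(4 / Real.pi ^ 2 * t) * θ ^ 2) := by
  rw [qq, integral_nuC]
  gcongr
  apply intervalIntegral.integral_mono_on (by linarith [Real.pi_pos])
  · exact Continuous.intervalIntegrable (by fun_prop) _ _
  · exact Continuous.intervalIntegrable (by fun_prop) _ _
  intro θ hθ
  apply Real.exp_le_exp.mpr
  have h := Real.cos_le_one_sub_mul_cos_sq (x := θ) (abs_le.mpr hθ)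
  have h2 : t * (2 / Real.pi ^ 2 * θ ^ 2) ≤ t * (1 - Real.cos θ) := by
    gcongr; linarith
  have : 4 / Real.pi ^ 2 * t * θ ^ 2 = 2 * (t * (2 / Real.pi ^ 2 * θ ^ 2)) := by ring
  linarith
  
lemma qq_upper : ∃ C : ℝ, 0 < C ∧ ∀ t : ℝ, 0 < t → qq t ≤ C * t ^ (-(1/2) : ℝ) := by
  refine ⟨(2 * Real.pi)⁻¹ * Real.sqrt (Real.pi * (Real.pi ^ 2 / 4)), by positivity, fun t ht => ?_⟩
  refine (qq_le_gauss ht.le).trans ?_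
  rw [mul_assoc]
  gcongr
  rw [intervalIntegral.integral_of_le (by linarith [Real.pi_pos])]
  refine (setIntegral_le_integral (integrable_exp_neg_mul_sq (by positivity))
    (ae_of_all _ fun _ => (Real.exp_pos _).le)).trans ?_
  rw [integral_gaussian, Real.rpow_neg ht.le, ← Real.sqrt_eq_rpow, ← Real.sqrt_inv,
    ← Real.sqrt_mul (by positivity)]
  apply Real.sqrt_le_sqrt
  apply le_of_eq
  field_simp

lemma qq_lower : ∃ c : ℝ, 0 < c ∧ ∀ t : ℝ, 1 ≤ t → c * t ^ (-(1/2) : ℝ) ≤ qq t := by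
  refine ⟨(2 * Real.pi)⁻¹ * Real.exp (-1), by positivity, fun t ht => ?_⟩
  have ht0 : 0 < t := by linarith
  rw [qq, integral_nuC, mul_assoc]
  gcongr
  have hr : t ^ (-(1/2) : ℝ) ≤ 1 := Real.rpow_le_one_of_one_le_of_nonpos ht (by norm_num)
  have hr0 : 0 < t ^ (-(1/2) : ℝ) := by positivity
  have hr2 : (t ^ (-(1/2) : ℝ)) ^ 2 = t⁻¹ := by
    rw [← Real.rpow_natCast, ← Real.rpow_mul ht0.le, ← Real.rpow_neg_one]; norm_num
  set r := t ^ (-(1/2) : ℝ)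
  have hpi := Real.pi_gt_three
  have h1 : ∫ θ in (0 : ℝ)..r, Real.exp (-1) ≤ ∫ θ in (0 : ℝ)..r,
      Real.exp (-(2 * t * (1 - Real.cos θ))) := by
    apply intervalIntegral.integral_mono_on hr0.le
    · simp
    · exact Continuous.intervalIntegrable (by fun_prop) _ _
    intro θ hθ
    apply Real.exp_le_exp.mpr
    have h2 := Real.one_sub_sq_div_two_le_cos (x := θ)
    have h3 : θ ^ 2 ≤ t⁻¹ := by rw [← hr2]; exact pow_le_pow_left₀ hθ.1 hθ.2 2
    have h4 : t * (2 * (1 - Real.cos θ)) ≤ t * t⁻¹ := by gcongr; linarith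
    rw [mul_inv_cancel₀ ht0.ne'] at h4
    linarith
  have h2 : ∫ θ in (0 : ℝ)..r, Real.exp (-(2 * t * (1 - Real.cos θ)))
      ≤ ∫ θ in (-Real.pi)..Real.pi, Real.exp (-(2 * t * (1 - Real.cos θ))) := by
    apply intervalIntegral.integral_mono_interval (by linarith) hr0.le (by linarith)
    · exact ae_of_all _ fun _ => (Real.exp_pos _).le
    · exact Continuous.intervalIntegrable (by fun_prop) _ _
  rw [intervalIntegral.integral_const] at h1
  simp only [sub_zero, smul_eq_mul] at h1
  linarith

end

section
open MeasureTheory ProbabilityTheory Filter Set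
open scoped ENNReal

lemma etsum_prod {α β : Type*} (f : α × β → ℝ≥0∞) : ∑' p, f p = ∑' a, ∑' b, f (a, b) :=
  ENNReal.tsum_prod (f := fun a b => f (a, b))

lemma indep_of_prod_form {Ω α β : Type*} [MeasurableSpace Ω] {P : Measure Ω}
    [IsProbabilityMeasure P] [Countable α] [Countable β] [MeasurableSpace α] [MeasurableSpace β]
    [MeasurableSingletonClass α] [MeasurableSingletonClass β]
    {X : Ω → α} {Y : Ω → β} (hX : Measurable X) (hY : Measurable Y)
    (F : α → ℝ≥0∞) (G : β → ℝ≥0∞) (h : ∀ a b, P {ω | X ω = a ∧ Y ω = b} = F a * G b) :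
    IndepFun X Y P := by
  have hXY : Measurable fun ω => (X ω, Y ω) := hX.prodMk hY
  have h1 : ∀ p : α × β, P.map (fun ω => (X ω, Y ω)) {p} = F p.1 * G p.2 := by
    intro p
    rw [Measure.map_apply hXY (measurableSet_singleton p), ← h]
    congr 1; ext ω; simp [Prod.ext_iff]
  have tot : (∑' a, F a) * (∑' b, G b) = 1 := by
    have : P.map (fun ω => (X ω, Y ω)) univ = 1 := by
      rw [Measure.map_apply hXY MeasurableSet.univ]; simp
    rw [← this, ← Measure.tsum_indicator_apply_singleton _ univ MeasurableSet.univ]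
    simp only [indicator_univ, h1]
    rw [etsum_prod]
    simp_rw [ENNReal.tsum_mul_left, ENNReal.tsum_mul_right]
  have hXa : ∀ a, P.map X {a} = F a * ∑' b, G b := by
    intro a
    have : P.map X {a} = P.map (fun ω => (X ω, Y ω)) ({a} ×ˢ univ) := by
      rw [Measure.map_apply hX (measurableSet_singleton a),
        Measure.map_apply hXY ((measurableSet_singleton a).prod MeasurableSet.univ)]
      congr 1; ext ω; simp
    rw [this, ← Measure.tsum_indicator_apply_singleton _ _
      ((measurableSet_singleton a).prod MeasurableSet.univ), etsum_prod, tsum_eq_single a]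
    · simp [h1, ENNReal.tsum_mul_left]
    · intro a' ha'; simp [ha']
  have hYb : ∀ b, P.map Y {b} = (∑' a, F a) * G b := by
    intro b
    have : P.map Y {b} = P.map (fun ω => (X ω, Y ω)) (univ ×ˢ {b}) := by
      rw [Measure.map_apply hY (measurableSet_singleton b),
        Measure.map_apply hXY (MeasurableSet.univ.prod (measurableSet_singleton b))]
      congr 1; ext ω; simp
    rw [this, ← Measure.tsum_indicator_apply_singleton _ _
      (MeasurableSet.univ.prod (measurableSet_singleton b)), etsum_prod,
      ENNReal.tsum_comm, tsum_eq_single b]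
    · simp [h1, ENNReal.tsum_mul_right]
    · intro a' ha'; simp [ha']
  rw [indepFun_iff_map_prod_eq_prod_map_map hX.aemeasurable hY.aemeasurable]
  apply Measure.ext_of_singleton
  rintro ⟨a, b⟩
  rw [h1, ← singleton_prod_singleton, Measure.prod_prod, hXa, hYb]
  simp only
  calc F a * G b = F a * G b * ((∑' a, F a) * (∑' b, G b)) := by rw [tot, mul_one]
    _ = _ := by ring

/-- the `ℤ^d` component of the walk -/
def tl {d : ℕ} {Ω : Type*} (S : ℝ → Ω → (Fin (d + 1) → ℤ)) (u : ℝ) (ω : Ω) : Fin d → ℤ :=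
  fun i => S u ω i.succ

lemma tl_meas {d : ℕ} {Ω : Type*} [MeasurableSpace Ω] {S : ℝ → Ω → (Fin (d + 1) → ℤ)}
    (hm : Measurable fun p : ℝ × Ω => S p.1 p.2) :
    Measurable fun p : ℝ × Ω => tl S p.1 p.2 := by
  unfold tl
  exact measurable_pi_lambda _ fun i => (measurable_pi_apply i.succ).comp hm

lemma heat_cons {d : ℕ} (t : ℝ) (x y : Fin (d + 1) → ℤ) :
    heatKernel (d + 1) t x y =
      kk t (y 0 - x 0) * ∏ i : Fin d, kk t (y i.succ - x i.succ) := by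
  rw [heat_fourier (by omega), Fin.prod_univ_succ]

section walk
variable {d : ℕ} {Ω : Type*} [MeasurableSpace Ω] {P : (Fin (d + 1) → ℤ) → Measure Ω}
  {S : ℝ → Ω → (Fin (d + 1) → ℤ)}

lemma fdd_ennreal (hS : IsCTSRW (d + 1) P S) {n : ℕ} (t : Fin (n + 1) → ℝ) (h0 : 0 ≤ t 0)
    (ht : ∀ i : Fin n, t i.castSucc ≤ t i.succ) (a : Fin (n + 1) → ℤ)
    (y : Fin (n + 1) → (Fin d → ℤ)) :
    P 0 {ω | ∀ i, S (t i) ω 0 = a i ∧ tl S (t i) ω = y i} =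
    (ENNReal.ofReal (kk (t 0) (a 0)) *
      ∏ i : Fin n, ENNReal.ofReal (kk (t i.succ - t i.castSucc) (a i.succ - a i.castSucc))) *
    (ENNReal.ofReal (∏ j, kk (t 0) (y 0 j)) *
      ∏ i : Fin n, ENNReal.ofReal (∏ j, kk (t i.succ - t i.castSucc)
        (y i.succ j - y i.castSucc j))) := by
  have := hS.prob 0
  have h := hS.fdd 0 n t h0 ht (fun i => Fin.cons (a i) (y i))
  have hset : {ω | ∀ i, S (t i) ω = (Fin.cons (a i) (y i) : Fin (d + 1) → ℤ)}
      = {ω | ∀ i, S (t i) ω 0 = a i ∧ tl S (t i) ω = y i} := by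
    ext ω
    simp only [mem_ofPred_eq]
    refine forall_congr' fun i => ?_
    constructor
    · intro h; exact ⟨by rw [h]; simp, by ext j; simp [tl, h]⟩
    · rintro ⟨h1, h2⟩
      ext j
      refine Fin.cases ?_ (fun j => ?_) j
      · simpa using h1
      · simpa [tl] using congrFun h2 j
  rw [hset] at h
  have hk : ∀ i : Fin n, ∀ a, 0 ≤ kk (t i.succ - t i.castSucc) a := fun i a =>
    kk_nonneg (by linarith [ht i]) a
  rw [← ENNReal.ofReal_toReal (measure_ne_top (P 0) _), h]
  simp only [heat_cons, Fin.cons_zero, Fin.cons_succ, Pi.zero_apply, sub_zero]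
  rw [Finset.prod_mul_distrib, ← ENNReal.ofReal_prod_of_nonneg (fun i _ => hk i _),
    ← ENNReal.ofReal_prod_of_nonneg (fun i _ => Finset.prod_nonneg fun j _ => hk i _),
    ← ENNReal.ofReal_mul (kk_nonneg h0 _),
    ← ENNReal.ofReal_mul (Finset.prod_nonneg fun j _ => kk_nonneg h0 _),
    ← ENNReal.ofReal_mul
      (mul_nonneg (kk_nonneg h0 _) (Finset.prod_nonneg fun i _ => hk i _))]
  congr 1; ring

lemma meas_S (hS : IsCTSRW (d + 1) P S) (u : ℝ) : Measurable (S u) :=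
  hS.meas.comp (measurable_const.prodMk measurable_id)

lemma meas_S0 (hS : IsCTSRW (d + 1) P S) (u : ℝ) : Measurable (fun ω => S u ω 0) :=
  (measurable_pi_apply 0).comp (meas_S hS u)

lemma meas_tl (hS : IsCTSRW (d + 1) P S) (u : ℝ) : Measurable (tl S u) :=
  (tl_meas hS.meas).comp (measurable_const.prodMk measurable_id)

lemma indep_process (hS : IsCTSRW (d + 1) P S) (s : NNReal) :
    IndepFun (fun ω => S s ω 0) (fun ω (u : NNReal) => tl S u ω) (P 0) := by
  classical
  have := hS.prob 0
  refine IndepFun.indepFun_process (meas_S0 hS s) (fun u => meas_tl hS u) fun I => ?_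
  obtain ⟨n, hn⟩ : ∃ n, (insert s I).card = n + 1 :=
    ⟨_, (Nat.succ_pred_eq_of_pos (Finset.card_pos.mpr ⟨s, Finset.mem_insert_self _ _⟩)).symm⟩
  let e := (insert s I).orderEmbOfFin hn
  have he : ∀ u ∈ insert s I, ∃ i, e i = u := by
    intro u hu
    have : u ∈ Set.range e := by
      rw [Finset.range_orderEmbOfFin]; exact hu
    exact this
  let t : Fin (n + 1) → ℝ := fun i => (e i : ℝ)
  let X : Ω → Fin (n + 1) → ℤ := fun ω i => S (t i) ω 0
  let Y : Ω → Fin (n + 1) → (Fin d → ℤ) := fun ω i => tl S (t i) ω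
  have hX : Measurable X := measurable_pi_lambda _ fun i => meas_S0 hS _
  have hY : Measurable Y := measurable_pi_lambda _ fun i => meas_tl hS _
  have hind : IndepFun X Y (P 0) := by
    refine indep_of_prod_form hX hY (h := fun a y => ?_)
      (F := fun a => ENNReal.ofReal (kk (t 0) (a 0)) *
      ∏ i : Fin n, ENNReal.ofReal (kk (t i.succ - t i.castSucc) (a i.succ - a i.castSucc)))
      (G := fun y => ENNReal.ofReal (∏ j, kk (t 0) (y 0 j)) *
      ∏ i : Fin n, ENNReal.ofReal (∏ j, kk (t i.succ - t i.castSucc)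
        (y i.succ j - y i.castSucc j)))
    rw [← fdd_ennreal hS t (e 0).2 (fun i => ?_) a y]
    · congr 1; ext ω; simp [X, Y, funext_iff, forall_and]
    · have : e i.castSucc ≤ e i.succ := e.monotone (Fin.castSucc_lt_succ).le
      exact_mod_cast this
  obtain ⟨i0, hi0⟩ := he s (Finset.mem_insert_self _ _)
  choose idx hidx using fun u : I => he u (Finset.mem_insert_of_mem u.2)
  have hφ : Measurable (fun a : Fin (n + 1) → ℤ => a i0) := measurable_pi_apply i0
  have hψ : Measurable (fun (y : Fin (n + 1) → (Fin d → ℤ)) (u : I) => y (idx u)) :=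
    measurable_pi_lambda _ fun u => measurable_pi_apply (idx u)
  have := hind.comp hφ hψ
  convert this using 1
  · ext ω; simp [X, t, hi0]
  · ext ω u; simp [Y, t, hidx]

lemma chain_tsum {n : ℕ} (f : ℤ → ℝ≥0∞) (g : Fin n → ℤ → ℝ≥0∞) (hf : ∑' a, f a = 1)
    (hg : ∀ i b, ∑' a, g i (a - b) = 1) :
    ∑' a : Fin (n + 1) → ℤ, f (a 0) * ∏ i : Fin n, g i (a i.succ - a i.castSucc) = 1 := by
  induction n generalizing f with
  | zero =>
    simp only [Finset.univ_eq_empty, Finset.prod_empty, mul_one]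
    rw [← hf, ← (Equiv.funUnique (Fin 1) ℤ).symm.tsum_eq]
    rfl
  | succ n ih =>
    rw [← (Fin.consEquiv (fun _ => ℤ)).tsum_eq, etsum_prod]
    simp only [Fin.consEquiv, Equiv.coe_fn_mk, Fin.cons_zero, Fin.prod_univ_succ, Fin.cons_succ,
      Fin.castSucc_zero, ← Fin.succ_castSucc]
    have h : ∀ b : ℤ, ∑' a : Fin (n + 1) → ℤ, g 0 (a 0 - b) *
        ∏ i : Fin n, g i.succ (a i.succ - a i.castSucc) = 1 := fun b =>
      ih (fun a => g 0 (a - b)) (fun i => g i.succ) (hg 0 b) (fun i => hg i.succ)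
    simp_rw [ENNReal.tsum_mul_left, h, mul_one, hf]

lemma prob_tl (hS : IsCTSRW (d + 1) P S) {t : ℝ} (ht : 0 ≤ t) (y : Fin d → ℤ) :
    P 0 {ω | tl S t ω = y} = ENNReal.ofReal (∏ j, kk t (y j)) := by
  have h : {ω | tl S t ω = y} = ⋃ a : ℤ, {ω | ∀ i : Fin 1, S t ω 0 = a ∧ tl S t ω = y} := by
    ext ω; simp
  rw [h, measure_iUnion]
  · have := fun a => fdd_ennreal hS (n := 0) (fun _ => t) ht (by simp) (fun _ => a) (fun _ => y)
    simp_rw [this]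
    simp [ENNReal.tsum_mul_right, kk_tsum ht]
  · intro a b hab
    rw [Function.onFun, Set.disjoint_left]
    intro ω h1 h2
    exact hab ((h1 0).1.symm.trans (h2 0).1)
  · intro a
    simp only [Fin.forall_fin_one]
    exact (meas_S0 hS t (measurableSet_singleton a)).inter
      (meas_tl hS t (measurableSet_singleton y))

lemma hd_tsum (hd : 1 ≤ d) {t : ℝ} (ht : 0 ≤ t) :
    ∑' y : Fin d → ℤ, ENNReal.ofReal (∏ j, kk t (y j)) = 1 := by
  rw [← heat_tsum_one hd ht 0]
  congr 1; ext y; rw [heat_fourier hd]; simp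

lemma prob_S0 (hd : 1 ≤ d) (hS : IsCTSRW (d + 1) P S) {t : ℝ} (ht : 0 ≤ t) (a : ℤ) :
    P 0 {ω | S t ω 0 = a} = ENNReal.ofReal (kk t a) := by
  have h : {ω | S t ω 0 = a} = ⋃ y : Fin d → ℤ,
      {ω | ∀ i : Fin 1, S t ω 0 = a ∧ tl S t ω = y} := by
    ext ω; simp
  rw [h, measure_iUnion]
  · have := fun y => fdd_ennreal hS (n := 0) (fun _ => t) ht (by simp) (fun _ => a) (fun _ => y)
    simp_rw [this]
    simp [ENNReal.tsum_mul_left, hd_tsum hd ht]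
  · intro y y' hab
    rw [Function.onFun, Set.disjoint_left]
    intro ω h1 h2
    exact hab ((h1 0).2.symm.trans (h2 0).2)
  · intro y
    simp only [Fin.forall_fin_one]
    exact (meas_S0 hS t (measurableSet_singleton a)).inter
      (meas_tl hS t (measurableSet_singleton y))

lemma prob_tl_zero (hS : IsCTSRW (d + 1) P S) {t : ℝ} (ht : 0 ≤ t) :
    P 0 {ω | tl S t ω = 0} = ENNReal.ofReal (qq t ^ d) := by
  rw [prob_tl hS ht]; simp [kk_zero]

lemma prob_coincide (hd : 1 ≤ d) (hS : IsCTSRW (d + 1) P S) {n : ℕ} (t : Fin (n + 1) → ℝ)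
    (h0 : 0 ≤ t 0) (ht : ∀ i : Fin n, t i.castSucc ≤ t i.succ) :
    P 0 {ω | ∀ i j, tl S (t i) ω = tl S (t j) ω} ≤
      ∏ i : Fin n, ENNReal.ofReal (qq (t i.succ - t i.castSucc)) := by
  have hsub : {ω | ∀ i j, tl S (t i) ω = tl S (t j) ω} ⊆
      ⋃ (b : Fin d → ℤ), ⋃ (a : Fin (n + 1) → ℤ),
        {ω | ∀ i, S (t i) ω 0 = a i ∧ tl S (t i) ω = b} := by
    intro ω hω
    simp only [mem_iUnion]
    exact ⟨tl S (t 0) ω, fun i => S (t i) ω 0, fun i => ⟨rfl, hω i 0⟩⟩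
  refine (measure_mono hsub).trans ((measure_iUnion_le _).trans ?_)
  refine (ENNReal.tsum_le_tsum fun b => measure_iUnion_le _).trans ?_
  have := fun a b => fdd_ennreal hS t h0 ht a (fun _ => b)
  simp_rw [this, ENNReal.tsum_mul_right]
  rw [chain_tsum (fun a => ENNReal.ofReal (kk (t 0) a))
    (fun i a => ENNReal.ofReal (kk (t i.succ - t i.castSucc) a)) (kk_tsum h0)
    (fun i b => kk_tsum_sub (by linarith [ht i]) b)]
  simp only [one_mul, sub_self]
  rw [ENNReal.tsum_mul_right, hd_tsum hd h0, one_mul]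
  refine Finset.prod_le_prod' fun i _ => ?_
  apply ENNReal.ofReal_le_ofReal
  simp only [kk_zero, Finset.prod_const, Finset.card_univ, Fintype.card_fin]
  have hn : 0 ≤ t i.succ - t i.castSucc := by linarith [ht i]
  exact pow_le_of_le_one (qq_nonneg _) (qq_le_one hn) (by omega)

end walk

end

section
open MeasureTheory ProbabilityTheory Filter Set
open scoped ENNReal

section walk
variable {d : ℕ} {Ω : Type*} [MeasurableSpace Ω] {P : (Fin (d + 1) → ℤ) → Measure Ω}
  {S : ℝ → Ω → (Fin (d + 1) → ℤ)}

/-- additive functional of the walk -/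
noncomputable def AF (S : ℝ → Ω → (Fin (d + 1) → ℤ)) (f : (Fin d → ℤ) → ℝ≥0∞) (t : ℝ) (ω : Ω) :
    ℝ≥0∞ := ∫⁻ u in Ioc 0 t, f (tl S u ω)

lemma AF_meas2 (hS : IsCTSRW (d + 1) P S) (f : (Fin d → ℤ) → ℝ≥0∞) :
    Measurable fun p : Ω × ℝ => f (tl S p.2 p.1) :=
  (measurable_of_countable f).comp ((tl_meas hS.meas).comp measurable_swap)

lemma AF_meas (hS : IsCTSRW (d + 1) P S) (f : (Fin d → ℤ) → ℝ≥0∞) (t : ℝ) :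
    Measurable (AF S f t) := by
  unfold AF
  exact (AF_meas2 hS f).lintegral_prod_right'

/-- grid times -/
noncomputable def gridT (n : ℕ) (k : ℕ) : NNReal := ((k : NNReal) + 1) / ((n : NNReal) + 1)

lemma gridT_coe (n k : ℕ) : ((gridT n k : NNReal) : ℝ) = ((k : ℝ) + 1) / ((n : ℝ) + 1) := by
  simp [gridT]

lemma gridT_lt (n : ℕ) {u : ℝ} : u < gridT n ⌊((n : ℝ) + 1) * u⌋₊ := by
  rw [gridT_coe, lt_div_iff₀ (by positivity), mul_comm]
  exact Nat.lt_floor_add_one _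

lemma gridT_le (n : ℕ) {u : ℝ} (hu : 0 ≤ u) :
    (gridT n ⌊((n : ℝ) + 1) * u⌋₊ : ℝ) ≤ u + 1 / ((n : ℝ) + 1) := by
  rw [gridT_coe, div_le_iff₀ (by positivity)]
  have := Nat.floor_le (show 0 ≤ ((n : ℝ) + 1) * u by positivity)
  field_simp
  linarith

lemma gridT_tendsto {u : ℝ} (hu : 0 ≤ u) :
    Tendsto (fun n : ℕ => (gridT n ⌊((n : ℝ) + 1) * u⌋₊ : ℝ)) atTop (nhds u) := by
  refine tendsto_of_tendsto_of_tendsto_of_le_of_le tendsto_const_nhds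
    (g := fun _ => u) (h := fun n : ℕ => u + 1 / ((n : ℝ) + 1)) ?_
    (fun n => (gridT_lt n).le) (fun n => gridT_le n hu)
  simpa using (tendsto_const_nhds (x := u)).add (tendsto_one_div_add_atTop_nhds_zero_nat (𝕜 := ℝ))

lemma grid_eventually {ω : Ω} (h : ∀ t : ℝ, 0 ≤ t →
    ∃ ε > (0 : ℝ), ∀ u, t ≤ u → u < t + ε → S u ω = S t ω) {u : ℝ} (hu : 0 ≤ u) :
    ∀ᶠ n : ℕ in atTop, S (gridT n ⌊((n : ℝ) + 1) * u⌋₊ : ℝ) ω = S u ω := by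
  obtain ⟨ε, hε, h⟩ := h u hu
  filter_upwards [(gridT_tendsto hu).eventually_lt_const (show u < u + ε by linarith)] with n hn
  exact h _ (gridT_lt n).le hn

/-- path functional -/
noncomputable def PhiF (f : (Fin d → ℤ) → ℝ≥0∞) (t : ℝ) (w : NNReal → Fin d → ℤ) : ℝ≥0∞ :=
  ⨆ N : ℕ, limsup (fun n : ℕ => ∫⁻ u in Ioc (0 : ℝ) t,
    min (f (w (gridT n ⌊((n : ℝ) + 1) * u⌋₊))) N) atTop

lemma PhiF_meas (f : (Fin d → ℤ) → ℝ≥0∞) (t : ℝ) : Measurable (PhiF f t) := by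
  unfold PhiF
  refine Measurable.iSup fun N => Measurable.limsup fun n => ?_
  have h1 : Measurable fun p : (NNReal → Fin d → ℤ) × ℕ => f (p.1 (gridT n p.2)) :=
    (measurable_of_countable f).comp
      (measurable_from_prod_countable_left fun k => measurable_pi_apply (gridT n k))
  have h2 : Measurable fun p : (NNReal → Fin d → ℤ) × ℝ =>
      min (f (p.1 (gridT n ⌊((n : ℝ) + 1) * p.2⌋₊))) (N : ℝ≥0∞) := by
    refine Measurable.min (h1.comp (measurable_fst.prodMk
      (Nat.measurable_floor.comp (measurable_snd.const_mul _)))) measurable_const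
  exact h2.lintegral_prod_right'

lemma AF_eq_PhiF (hS : IsCTSRW (d + 1) P S) (f : (Fin d → ℤ) → ℝ≥0∞) (t : ℝ) :
    ∀ᵐ ω ∂ P 0, AF S f t ω = PhiF f t (fun u : NNReal => tl S u ω) := by
  filter_upwards [hS.rightCont 0] with ω hω
  have hm : Measurable fun u => tl S u ω := (tl_meas hS.meas).comp (measurable_id.prodMk
    measurable_const)
  have hfm : Measurable fun u => f (tl S u ω) := (measurable_of_countable f).comp hm
  have h1 : ∀ N : ℕ, limsup (fun n : ℕ => ∫⁻ u in Ioc (0 : ℝ) t,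
      min (f (tl S (gridT n ⌊((n : ℝ) + 1) * u⌋₊ : ℝ) ω)) N) atTop
      = ∫⁻ u in Ioc (0 : ℝ) t, min (f (tl S u ω)) N := by
    intro N
    refine Tendsto.limsup_eq ?_
    refine tendsto_lintegral_of_dominated_convergence (fun _ => (N : ℝ≥0∞)) (fun n => ?_)
      (fun n => ae_of_all _ fun u => min_le_right _ _) ?_ ?_
    · refine Measurable.min ?_ measurable_const
      have : Measurable fun k : ℕ => f (tl S (gridT n k : ℝ) ω) := measurable_from_nat
      exact this.comp (Nat.measurable_floor.comp (measurable_id.const_mul _))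
    · rw [lintegral_const]
      exact ENNReal.mul_ne_top (ENNReal.natCast_ne_top _) (by simp)
    · refine (ae_restrict_iff' measurableSet_Ioc).mpr (ae_of_all _ fun u hu => ?_)
      refine tendsto_const_nhds.congr' ?_
      filter_upwards [grid_eventually hω hu.1.le] with n hn
      have e : tl S (gridT n ⌊((n : ℝ) + 1) * u⌋₊ : ℝ) ω = tl S u ω := by
        ext i; exact congrFun hn i.succ
      change min (f (tl S u ω)) _ = min (f (tl S _ ω)) _
      rw [e]
  unfold AF PhiF
  simp_rw [h1]
  rw [← lintegral_iSup]
  · congr 1; ext u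
    refine le_antisymm ?_ (iSup_le fun N => min_le_left _ _)
    refine le_of_forall_lt fun c hc => ?_
    obtain ⟨N, hN⟩ := ENNReal.exists_nat_gt hc.ne_top
    exact lt_of_lt_of_le (lt_min hc hN) (le_iSup (fun N : ℕ => min (f (tl S u ω)) (N : ℝ≥0∞)) N)
  · exact fun N => hfm.min measurable_const
  · intro a b hab u
    exact min_le_min_left _ (by exact_mod_cast hab)

lemma quenched_grid (hd : 1 ≤ d) (hS : IsCTSRW (d + 1) P S) (f : (Fin d → ℤ) → ℝ≥0∞) {t : ℝ}
    (ht : 0 ≤ t) (n : ℕ) :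
    P 0 {ω | S (gridT n ⌊((n : ℝ) + 1) * (AF S f t ω).toReal⌋₊ : ℝ) ω 0 = 0 ∧ tl S t ω = 0} =
    ∫⁻ ω in {ω | tl S t ω = 0},
      ENNReal.ofReal (qq (gridT n ⌊((n : ℝ) + 1) * (AF S f t ω).toReal⌋₊ : ℝ)) ∂ P 0 := by
  have := hS.prob 0
  have hJ : Measurable fun ω => ⌊((n : ℝ) + 1) * (AF S f t ω).toReal⌋₊ :=
    Nat.measurable_floor.comp ((AF_meas hS f t).ennreal_toReal.const_mul _)
  have h0 : MeasurableSet {ω | tl S t ω = 0} := meas_tl hS t (measurableSet_singleton 0)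
  have hpart : ∀ E : Set Ω, E = ⋃ j : ℕ, E ∩ {ω | ⌊((n : ℝ) + 1) * (AF S f t ω).toReal⌋₊ = j} := by
    intro E; ext ω; simp
  have hdis : ∀ E : Set Ω, Pairwise (Function.onFun Disjoint
      fun j : ℕ => E ∩ {ω | ⌊((n : ℝ) + 1) * (AF S f t ω).toReal⌋₊ = j}) := by
    intro E a b hab
    rw [Function.onFun, Set.disjoint_left]
    rintro ω ⟨_, h1⟩ ⟨_, h2⟩
    exact hab (h1.symm.trans h2)
  have key : ∀ j : ℕ, P 0 ({ω | S (gridT n j : ℝ) ω 0 = 0} ∩ ({ω | tl S t ω = 0} ∩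
      {ω | ⌊((n : ℝ) + 1) * (AF S f t ω).toReal⌋₊ = j})) = ENNReal.ofReal (qq (gridT n j : ℝ)) *
      P 0 ({ω | tl S t ω = 0} ∩ {ω | ⌊((n : ℝ) + 1) * (AF S f t ω).toReal⌋₊ = j}) := by
    intro j
    have hB : MeasurableSet {w : NNReal → Fin d → ℤ | w t.toNNReal = 0 ∧
        ⌊((n : ℝ) + 1) * (PhiF f t w).toReal⌋₊ = j} :=
      ((measurable_pi_apply _) (measurableSet_singleton 0)).inter
        ((Nat.measurable_floor.comp ((PhiF_meas f t).ennreal_toReal.const_mul _))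
          (measurableSet_singleton j))
    have hae : ({ω | tl S t ω = 0} ∩ {ω | ⌊((n : ℝ) + 1) * (AF S f t ω).toReal⌋₊ = j} : Set Ω)
        =ᵐ[P 0] (fun ω (u : NNReal) => tl S u ω) ⁻¹' {w : NNReal → Fin d → ℤ | w t.toNNReal = 0 ∧
        ⌊((n : ℝ) + 1) * (PhiF f t w).toReal⌋₊ = j} := by
      filter_upwards [AF_eq_PhiF hS f t] with ω hω
      apply propext
      change (tl S t ω = 0 ∧ _ = j) ↔ (tl S (t.toNNReal : ℝ) ω = 0 ∧ _ = j)
      rw [hω, Real.coe_toNNReal t ht]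
    have hae2 := measure_congr (ae_eq_set_inter
      (ae_eq_refl (μ := P 0) {ω | S (gridT n j : ℝ) ω 0 = 0}) hae)
    refine hae2.trans ?_
    rw [measure_congr hae]
    have := (indep_process hS (gridT n j)).measure_inter_preimage_eq_mul {0} _
      (measurableSet_singleton 0) hB
    have h3 := prob_S0 hd hS (NNReal.coe_nonneg (gridT n j)) 0
    rw [kk_zero] at h3
    rw [← h3]
    exact this
  rw [hpart {ω | S _ ω 0 = 0 ∧ _}, measure_iUnion (hdis _), hpart {ω | tl S t ω = 0},
    lintegral_iUnion _ (hdis _)]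
  · refine tsum_congr fun j => ?_
    have e1 : ({ω | S (gridT n ⌊((n : ℝ) + 1) * (AF S f t ω).toReal⌋₊ : ℝ) ω 0 = 0 ∧
        tl S t ω = 0} ∩ {ω | ⌊((n : ℝ) + 1) * (AF S f t ω).toReal⌋₊ = j}) =
        ({ω | S (gridT n j : ℝ) ω 0 = 0} ∩ ({ω | tl S t ω = 0} ∩
      {ω | ⌊((n : ℝ) + 1) * (AF S f t ω).toReal⌋₊ = j})) := by
      ext ω
      simp only [mem_inter_iff, mem_ofPred_eq]
      constructor
      · rintro ⟨⟨h1, h2⟩, h3⟩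
        rw [h3] at h1; exact ⟨h1, h2, h3⟩
      · rintro ⟨h1, h2, h3⟩
        refine ⟨⟨?_, h2⟩, h3⟩
        rw [h3]; exact h1
    rw [e1, key j]
    have hms : MeasurableSet ({ω | tl S t ω = 0} ∩
      {ω | ⌊((n : ℝ) + 1) * (AF S f t ω).toReal⌋₊ = j}) := h0.inter (hJ (measurableSet_singleton j))
    rw [setLIntegral_congr_fun hms (g := fun _ => ENNReal.ofReal (qq (gridT n j : ℝ)))]
    · simp
    · rintro ω ⟨_, h⟩
      have h : ⌊((n : ℝ) + 1) * (AF S f t ω).toReal⌋₊ = j := h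
      simp only [h]
  · exact fun j => h0.inter (hJ (measurableSet_singleton j))
  · intro j
    refine MeasurableSet.inter (MeasurableSet.inter ?_ h0) (hJ (measurableSet_singleton j))
    have : Measurable fun ω => S (gridT n ⌊((n : ℝ) + 1) * (AF S f t ω).toReal⌋₊ : ℝ) ω 0 := by
      refine (measurable_pi_apply 0).comp (hS.meas.comp (Measurable.prodMk ?_ measurable_id))
      exact (measurable_from_nat (f := fun k => ((gridT n k : NNReal) : ℝ))).comp hJ
    exact this (measurableSet_singleton 0)

lemma quenched (hd : 1 ≤ d) (hS : IsCTSRW (d + 1) P S) (f : (Fin d → ℤ) → ℝ≥0∞) {t : ℝ}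
    (ht : 0 ≤ t) :
    P 0 {ω | S (AF S f t ω).toReal ω 0 = 0 ∧ tl S t ω = 0} =
    ∫⁻ ω in {ω | tl S t ω = 0}, ENNReal.ofReal (qq (AF S f t ω).toReal) ∂ P 0 := by
  have := hS.prob 0
  have h0 : MeasurableSet {ω | tl S t ω = 0} := meas_tl hS t (measurableSet_singleton 0)
  have hJ : ∀ n : ℕ, Measurable fun ω => ⌊((n : ℝ) + 1) * (AF S f t ω).toReal⌋₊ := fun n =>
    Nat.measurable_floor.comp ((AF_meas hS f t).ennreal_toReal.const_mul _)
  have hG : ∀ n : ℕ, Measurable fun ω =>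
      ((gridT n ⌊((n : ℝ) + 1) * (AF S f t ω).toReal⌋₊ : NNReal) : ℝ) := fun n =>
    (measurable_from_nat (f := fun k => ((gridT n k : NNReal) : ℝ))).comp (hJ n)
  have hms : ∀ {τ : Ω → ℝ}, Measurable τ → MeasurableSet {ω | S (τ ω) ω 0 = 0 ∧ tl S t ω = 0} := by
    intro τ hτ
    refine MeasurableSet.inter ?_ h0
    exact ((measurable_pi_apply 0).comp (hS.meas.comp (hτ.prodMk measurable_id)))
      (measurableSet_singleton 0)
  refine tendsto_nhds_unique (f := fun n : ℕ => P 0 {ω | S (gridT n ⌊((n : ℝ) + 1) *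
    (AF S f t ω).toReal⌋₊ : ℝ) ω 0 = 0 ∧ tl S t ω = 0}) (l := atTop) ?_ ?_
  · refine tendsto_measure_of_ae_tendsto_indicator_of_isFiniteMeasure atTop
      (hms (AF_meas hS f t).ennreal_toReal) (fun n => hms (hG n)) ?_
    filter_upwards [hS.rightCont 0] with ω hω
    filter_upwards [grid_eventually hω (u := (AF S f t ω).toReal) ENNReal.toReal_nonneg] with n hn
    simp only [mem_ofPred_eq, hn]
  · simp_rw [quenched_grid hd hS f ht]
    refine tendsto_lintegral_of_dominated_convergence' (fun _ => 1) (fun n => ?_)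
      (fun n => ae_of_all _ fun ω => ?_) ?_ (ae_of_all _ fun ω => ?_)
    · refine Measurable.aemeasurable ?_
      exact (measurable_from_nat (f := fun k => ENNReal.ofReal (qq (gridT n k : ℝ)))).comp (hJ n)
    · exact ENNReal.ofReal_le_one.mpr (qq_le_one (NNReal.coe_nonneg _))
    · simp
    · refine ENNReal.tendsto_ofReal ?_
      have hc := qq_continuousOn (AF S f t ω).toReal (ENNReal.toReal_nonneg : (0:ℝ) ≤ _)
      exact hc.tendsto.comp (tendsto_nhdsWithin_iff.mpr ⟨gridT_tendsto ENNReal.toReal_nonneg,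
        Eventually.of_forall fun n => NNReal.coe_nonneg _⟩)

lemma clock_eq {Ωz : Type*} (hS : IsCTSRW (d + 1) P S) (z : (Fin d → ℤ) → Ωz → ℝ)
    (hz : ∀ x ζ, 0 ≤ z x ζ) (t : ℝ) (ζ : Ωz) (ω : Ω) :
    clock d z S t ζ ω = (AF S (fun y => ENNReal.ofReal (z y ζ)) t ω).toReal := by
  unfold clock AF
  rw [integral_eq_lintegral_of_nonneg_ae]
  · rfl
  · exact ae_of_all _ fun u => hz _ _
  · have hm : Measurable fun u => tl S u ω := (tl_meas hS.meas).comp (measurable_id.prodMk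
      measurable_const)
    exact ((measurable_of_countable fun y => z y ζ).comp hm).aestronglyMeasurable

lemma quenched_walk {Ωz : Type*} (hd : 1 ≤ d) (hS : IsCTSRW (d + 1) P S) (z : (Fin d → ℤ) → Ωz → ℝ)
    (hz : ∀ x ζ, 0 ≤ z x ζ) {t : ℝ} (ht : 0 ≤ t) (ζ : Ωz) :
    P 0 {ω | layeredWalk d z S t ζ ω = 0} = ∫⁻ ω in {ω | tl S t ω = 0},
      ENNReal.ofReal (qq (AF S (fun y => ENNReal.ofReal (z y ζ)) t ω).toReal) ∂ P 0 := by
  rw [← quenched hd hS _ ht]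
  congr 1; ext ω
  simp only [mem_ofPred_eq, layeredWalk, clock_eq hS z hz, Prod.ext_iff]
  rfl

end walk

end

section
open MeasureTheory ProbabilityTheory Filter Set
open scoped ENNReal

noncomputable def Wf {d : ℕ} (x : Fin d → ℤ) : ℝ := Real.exp (∑ i, |(x i : ℝ)|)

lemma Wf_ge {d : ℕ} (x : Fin d → ℤ) : 1 ≤ Wf x :=
  Real.one_le_exp (Finset.sum_nonneg fun _ _ => abs_nonneg _)

lemma geom_Z {b : ℝ} (hb : 0 < b) : ∑' a : ℤ, ENNReal.ofReal (Real.exp (-(b * |(a : ℝ)|))) ≠ ⊤ := by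
  have h : Summable fun a : ℤ => Real.exp (-(b * |(a : ℝ)|)) := by
    apply Summable.of_nat_of_neg
    · have : Summable fun n : ℕ => Real.exp (-b) ^ n :=
        summable_geometric_of_lt_one (Real.exp_pos _).le (by simpa using hb)
      refine this.congr fun n => ?_
      rw [← Real.exp_nat_mul]; congr 1; simp; ring
    · have : Summable fun n : ℕ => Real.exp (-b) ^ n :=
        summable_geometric_of_lt_one (Real.exp_pos _).le (by simpa using hb)
      refine this.congr fun n => ?_
      rw [← Real.exp_nat_mul]; congr 1; simp; ring
  exact h.tsum_ofReal_ne_top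

lemma geom_Zd {b : ℝ} (hb : 0 < b) (d : ℕ) :
    ∑' y : Fin d → ℤ, ENNReal.ofReal (Wf y ^ (-b)) ≠ ⊤ := by
  have e : ∀ (d : ℕ) (y : Fin d → ℤ), ENNReal.ofReal (Wf y ^ (-b)) =
      ∏ i, ENNReal.ofReal (Real.exp (-(b * |(y i : ℝ)|))) := by
    intro d y
    rw [← ENNReal.ofReal_prod_of_nonneg (fun _ _ => (Real.exp_pos _).le), ← Real.exp_sum, Wf,
      ← Real.exp_mul]
    congr 2
    rw [Finset.sum_neg_distrib, ← Finset.mul_sum]; ring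
  simp_rw [e]
  induction d with
  | zero => simp
  | succ d ih =>
    rw [← (Fin.consEquiv (fun _ => ℤ)).tsum_eq, etsum_prod]
    simp only [Fin.consEquiv, Equiv.coe_fn_mk, Fin.cons_zero, Fin.prod_univ_succ, Fin.cons_succ]
    simp_rw [ENNReal.tsum_mul_left, ENNReal.tsum_mul_right]
    exact ENNReal.mul_ne_top (geom_Z hb) ih

section scen
variable {d : ℕ} {α : ℝ} {Ωz : Type*} [MeasurableSpace Ωz] {μ : Measure Ωz}
  {z : (Fin d → ℤ) → Ωz → ℝ}

lemma tail_upper (hα : 0 < α) (hz : IsScenery d α μ z) :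
    ∃ R : ℝ, 1 ≤ R ∧ ∀ r, R ≤ r → (μ {ω | r < z 0 ω}).toReal ≤ r ^ (-(α / 2)) := by
  have h := hz.tail.eventually_lt_const (show -α < -(α / 2) by linarith)
  obtain ⟨R, hR⟩ := (h.and (eventually_gt_atTop 1)).exists_forall_of_atTop
  refine ⟨max R 1, le_max_right _ _, fun r hr => ?_⟩
  obtain ⟨h1, h2⟩ := hR r ((le_max_left _ _).trans hr)
  have hl := Real.log_pos h2
  rw [div_lt_iff₀ hl] at h1
  rcases eq_or_lt_of_le (ENNReal.toReal_nonneg (a := μ {ω | r < z 0 ω})) with h0 | h0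
  · rw [← h0]; positivity
  · rw [← Real.exp_log h0, Real.rpow_def_of_pos (by linarith)]
    apply Real.exp_le_exp.mpr; linarith

lemma tail_lower (hα : 0 < α) (hz : IsScenery d α μ z) {β : ℝ} (hβ : α < β) :
    ∃ c : ℝ, 0 < c ∧ ∀ r, 1 ≤ r → c * r ^ (-β) ≤ (μ {ω | r < z 0 ω}).toReal := by
  have := hz.prob
  have h := hz.tail.eventually_const_lt (show -β < -α by linarith)
  have h' := hz.tail.eventually_lt_const (show -α < 0 by linarith)
  obtain ⟨R0, hR0⟩ := ((h.and h').and (eventually_gt_atTop 1)).exists_forall_of_atTop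
  have key : ∀ r, R0 ≤ r → r ^ (-β) ≤ (μ {ω | r < z 0 ω}).toReal := by
    intro r hr
    obtain ⟨⟨h1, h1'⟩, h2⟩ := hR0 r hr
    have hl := Real.log_pos h2
    rw [lt_div_iff₀ hl] at h1
    rcases eq_or_lt_of_le (ENNReal.toReal_nonneg (a := μ {ω | r < z 0 ω})) with h0 | h0
    · rw [← h0] at h1'; simp at h1'
    · rw [← Real.exp_log h0, Real.rpow_def_of_pos (by linarith)]
      apply Real.exp_le_exp.mpr; linarith
  set R := max R0 1
  have hR1 : 1 ≤ R := le_max_right _ _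
  refine ⟨R ^ (-β), by positivity, fun r hr => ?_⟩
  have hr1 : r ^ (-β) ≤ 1 := Real.rpow_le_one_of_one_le_of_nonpos hr (by linarith)
  have hR2 : R ^ (-β) ≤ 1 := Real.rpow_le_one_of_one_le_of_nonpos hR1 (by linarith)
  have p1 : 0 < r ^ (-β) := by positivity
  have p2 : 0 < R ^ (-β) := by positivity
  rcases le_total R r with h | h
  · calc _ ≤ 1 * r ^ (-β) := by gcongr
      _ ≤ _ := by rw [one_mul]; exact key r ((le_max_left _ _).trans h)
  · calc _ ≤ R ^ (-β) * 1 := by gcongr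
      _ ≤ (μ {ω | R < z 0 ω}).toReal := by rw [mul_one]; exact key R (le_max_left _ _)
      _ ≤ _ := by
        apply ENNReal.toReal_mono (measure_ne_top _ _)
        exact measure_mono fun ω hω => lt_of_le_of_lt h hω

lemma scen_bound (hα : 0 < α) (hz : IsScenery d α μ z) :
    ∀ᵐ ζ ∂ μ, ∃ C : ℝ, 0 ≤ C ∧ ∀ y, z y ζ ≤ C * Wf y := by
  have := hz.prob
  obtain ⟨R, hR1, hR⟩ := tail_upper hα hz
  have hsum : ∑' y : Fin d → ℤ, μ {ζ | R * Wf y < z y ζ} ≠ ⊤ := by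
    refine ne_top_of_le_ne_top (geom_Zd (half_pos hα) d) (ENNReal.tsum_le_tsum fun y => ?_)
    have e : μ {ζ | R * Wf y < z y ζ} = μ {ζ | R * Wf y < z 0 ζ} :=
      (hz.ident y).measure_mem_eq measurableSet_Ioi
    have hW := Wf_ge y
    rw [e, ← ENNReal.ofReal_toReal (measure_ne_top μ {ζ | R * Wf y < z 0 ζ})]
    apply ENNReal.ofReal_le_ofReal
    refine (hR _ (le_mul_of_one_le_right (by linarith) hW)).trans ?_
    exact Real.rpow_le_rpow_of_nonpos (by linarith) (by nlinarith) (by linarith)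
  filter_upwards [ae_finite_setOf_mem hsum] with ζ hζ
  refine ⟨R + ∑ y ∈ hζ.toFinset, z y ζ, add_nonneg (by linarith)
    (Finset.sum_nonneg fun y _ => hz.nonneg y ζ), fun y => ?_⟩
  have hW := Wf_ge y
  have hs : 0 ≤ ∑ y ∈ hζ.toFinset, z y ζ := Finset.sum_nonneg fun y _ => hz.nonneg y ζ
  by_cases hy : R * Wf y < z y ζ
  · have : z y ζ ≤ ∑ y ∈ hζ.toFinset, z y ζ :=
      Finset.single_le_sum (f := fun y => z y ζ) (fun y _ => hz.nonneg y ζ) (by simpa using hy)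
    nlinarith
  · push Not at hy
    nlinarith

end scen

section walk
variable {d : ℕ} {Ω : Type*} [MeasurableSpace Ω] {P : (Fin (d + 1) → ℤ) → Measure Ω}
  {S : ℝ → Ω → (Fin (d + 1) → ℤ)}

lemma prob_S (hS : IsCTSRW (d + 1) P S) {t : ℝ} (ht : 0 ≤ t) (x : Fin (d + 1) → ℤ) :
    P 0 {ω | S t ω = x} = ENNReal.ofReal (heatKernel (d + 1) t 0 x) := by
  have := hS.prob 0
  have h := hS.fdd 0 0 (fun _ => t) ht (by simp) (fun _ => x)
  rw [← ENNReal.ofReal_toReal (measure_ne_top (P 0) _)]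
  congr 1
  simpa using h

lemma Wf_step {d : ℕ} (x : Fin (d + 1) → ℤ) (i : Fin (d + 1)) (v : ℤ) (hv : |v - x i| ≤ 1) :
    Wf (fun j : Fin d => Function.update x i v j.succ) ≤ Real.exp 1 * Wf (fun j => x j.succ) := by
  unfold Wf
  rw [← Real.exp_add]
  apply Real.exp_le_exp.mpr
  have h1 : ∀ j : Fin d, |((Function.update x i v j.succ : ℤ) : ℝ)| ≤
      (if j.succ = i then 1 else 0) + |(x j.succ : ℝ)| := by
    intro j
    by_cases h : j.succ = i
    · subst h
      simp only [Function.update_self, if_true]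
      have : |(v : ℝ) - x j.succ| ≤ 1 := by exact_mod_cast hv
      have := abs_sub_abs_le_abs_sub (v : ℝ) (x j.succ)
      linarith
    · simp [h]
  refine (Finset.sum_le_sum fun j _ => h1 j).trans ?_
  rw [Finset.sum_add_distrib]
  gcongr
  rw [Finset.sum_ite, Finset.sum_const_zero, add_zero, Finset.sum_const, nsmul_eq_mul, mul_one]
  have : (Finset.univ.filter fun j : Fin d => j.succ = i).card ≤ 1 := by
    rw [Finset.card_le_one]
    intro a ha b hb
    simp only [Finset.mem_filter] at ha hb
    exact Fin.succ_injective _ (ha.2.trans hb.2.symm)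
  exact_mod_cast this

lemma exp_W (hS : IsCTSRW (d + 1) P S) {t : ℝ} (ht : 0 ≤ t) :
    ∫⁻ ω, ENNReal.ofReal (Wf (tl S t ω)) ∂ P 0 ≤
      ENNReal.ofReal (Real.exp (2 * (d + 1 : ℕ) * t * (Real.exp 1 - 1))) := by
  let g : (Fin (d + 1) → ℤ) → ℝ≥0∞ := fun x => ENNReal.ofReal (Wf fun j => x j.succ)
  have e : ∫⁻ ω, ENNReal.ofReal (Wf (tl S t ω)) ∂ P 0 =
      ∑' x, ENNReal.ofReal (heatKernel (d + 1) t 0 x) * g x := by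
    have : ∫⁻ ω, g (S t ω) ∂ P 0 = ∫⁻ x, g x ∂ (P 0).map (S t) :=
      (lintegral_map (measurable_of_countable g) (meas_S hS t)).symm
    refine (this.trans ?_)
    rw [lintegral_countable']
    refine tsum_congr fun x => ?_
    rw [Measure.map_apply (meas_S hS t) (measurableSet_singleton x), mul_comm, ← prob_S hS ht x]
    rfl
  rw [e]
  have key : ∀ (x : Fin (d + 1) → ℤ) (i : Fin (d + 1)) (v : ℤ), |v - x i| ≤ 1 →
      g (Function.update x i v) ≤ ENNReal.ofReal (Real.exp 1) * g x := by
    intro x i v hv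
    simp only [g]
    rw [← ENNReal.ofReal_mul (Real.exp_pos _).le]
    exact ENNReal.ofReal_le_ofReal (Wf_step x i v hv)
  refine (heat_tsum_le (by omega) ht 0 g (Real.exp_pos 1).le (fun x i => key x i _ (by simp))
    (fun x i => key x i _ (by simp))).trans ?_
  simp [g, Wf]

lemma AF_lt_top (hS : IsCTSRW (d + 1) P S) (f : (Fin d → ℤ) → ℝ≥0∞) (C : ℝ≥0∞) (hC : C ≠ ⊤)
    (hf : ∀ y, f y ≤ C * ENNReal.ofReal (Wf y)) (t : ℝ) : ∀ᵐ ω ∂ P 0, AF S f t ω < ⊤ := by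
  have := hS.prob 0
  refine ae_lt_top (AF_meas hS f t) ?_
  have hb : ∫⁻ ω, AF S f t ω ∂ P 0 ≤ C * ∫⁻ u in Ioc 0 t, ENNReal.ofReal (Real.exp (2 * (d + 1 : ℕ) * t * (Real.exp 1 - 1))) := by
    unfold AF
    rw [lintegral_lintegral_swap (AF_meas2 hS f).aemeasurable, ← lintegral_const_mul' _ _ hC]
    refine setLIntegral_mono' measurableSet_Ioc fun u hu => ?_
    calc _ ≤ ∫⁻ ω, C * ENNReal.ofReal (Wf (tl S u ω)) ∂ P 0 := lintegral_mono fun ω => hf _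
      _ = C * ∫⁻ ω, ENNReal.ofReal (Wf (tl S u ω)) ∂ P 0 := lintegral_const_mul' _ _ hC
      _ ≤ _ := by
        gcongr
        refine (exp_W hS hu.1.le).trans (ENNReal.ofReal_le_ofReal (Real.exp_le_exp.mpr ?_))
        have : 0 ≤ Real.exp 1 - 1 := by linarith [Real.one_le_exp (zero_le_one (α := ℝ))]
        have := hu.2
        gcongr
  refine ne_top_of_le_ne_top ?_ hb
  rw [lintegral_const]
  exact ENNReal.mul_ne_top hC (ENNReal.mul_ne_top ENNReal.ofReal_ne_top (by simp))

lemma clock_finite {α : ℝ} {Ωz : Type*} [MeasurableSpace Ωz] {μ : Measure Ωz}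
    {z : (Fin d → ℤ) → Ωz → ℝ} (hα : 0 < α) (hz : IsScenery d α μ z) (hS : IsCTSRW (d + 1) P S) :
    ∀ᵐ ζ ∂ μ, ∀ t, ∀ᵐ ω ∂ P 0, AF S (fun y => ENNReal.ofReal (z y ζ)) t ω < ⊤ := by
  filter_upwards [scen_bound hα hz] with ζ ⟨C, hC, h⟩ t
  refine AF_lt_top hS _ (ENNReal.ofReal C) ENNReal.ofReal_ne_top (fun y => ?_) t
  rw [← ENNReal.ofReal_mul hC]
  exact ENNReal.ofReal_le_ofReal (h y)

end walk

end

section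
open MeasureTheory ProbabilityTheory Filter Set
open scoped ENNReal

section scen
variable {d : ℕ} {α : ℝ} {Ωz : Type*} [MeasurableSpace Ωz] {μ : Measure Ωz}
  {z : (Fin d → ℤ) → Ωz → ℝ}

lemma lap_integrable (hz : IsScenery d α μ z) {s : ℝ} (hs : 0 ≤ s) (y : Fin d → ℤ) :
    Integrable (fun ζ => Real.exp (-s * z y ζ)) μ := by
  have := hz.prob
  refine Integrable.of_bound (C := 1)
    ((hz.meas y).const_mul _).exp.aestronglyMeasurable (ae_of_all _ fun ζ => ?_)
  rw [Real.norm_eq_abs, abs_of_pos (Real.exp_pos _), Real.exp_le_one_iff]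
  have := mul_nonneg hs (hz.nonneg y ζ)
  linarith

lemma lap_le (hz : IsScenery d α μ z) {s κ r : ℝ} (hs : 0 ≤ s)
    (h : ∀ x, r < x → Real.exp (-s * x) ≤ 1 - κ) (y : Fin d → ℤ) :
    mgf (z y) μ (-s) ≤ Real.exp (-(κ * (μ {ω | r < z 0 ω}).toReal)) := by
  have := hz.prob
  have e : (μ {ω | r < z 0 ω}).toReal = (μ {ω | r < z y ω}).toReal := by
    have : μ {ω | r < z y ω} = μ {ω | r < z 0 ω} := (hz.ident y).measure_mem_eq measurableSet_Ioi
    rw [this]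
  have hE : MeasurableSet {ω | r < z y ω} := hz.meas y measurableSet_Ioi
  have h1 : mgf (z y) μ (-s) ≤ ∫ ζ, (1 - {ω | r < z y ω}.indicator (fun _ => κ) ζ) ∂μ := by
    refine integral_mono (lap_integrable hz hs y)
      ((integrable_const _).sub ((integrable_const κ).indicator hE)) fun ζ => ?_
    by_cases hζ : r < z y ζ
    · simpa [hζ] using h _ hζ
    · have := mul_nonneg hs (hz.nonneg y ζ)
      simp [hζ, this]
  rw [integral_sub (integrable_const _) ((integrable_const κ).indicator hE),
    integral_indicator_const _ hE] at h1
  simp only [integral_const, smul_eq_mul, mul_one, Measure.real, measure_univ, ENNReal.toReal_one] at h1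
  rw [e]
  refine h1.trans ?_
  have := Real.add_one_le_exp (-(κ * (μ {ω | r < z y ω}).toReal))
  linarith

lemma one_sub_inv_e : 0 < 1 - Real.exp (-1) := by
  have : Real.exp (-1) < 1 := by rw [Real.exp_lt_one_iff]; norm_num
  linarith

lemma laplace_gen (hα : 0 < α) (hz : IsScenery d α μ z) :
    ∃ c : ℝ, 0 < c ∧ ∀ s, 0 ≤ s → ∀ y, mgf (z y) μ (-s) ≤ Real.exp (-(c * (min 1 s) ^ (1 : ℝ))) := by
  obtain ⟨c, hc, h⟩ := tail_lower hα hz (β := α + 1) (by linarith)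
  have h1 := h 1 le_rfl
  simp only [Real.one_rpow, mul_one] at h1
  refine ⟨(1 - Real.exp (-1)) * c, mul_pos one_sub_inv_e hc, fun s hs y => ?_⟩
  have hm0 : 0 ≤ min 1 s := le_min zero_le_one hs
  have hm1 : min 1 s ≤ 1 := min_le_left _ _
  refine (lap_le hz (κ := (1 - Real.exp (-1)) * min 1 s) (r := 1) hs (fun x hx => ?_) y).trans ?_
  · have hcv := convexOn_exp.2 (mem_univ (0 : ℝ)) (mem_univ (-1 : ℝ))
      (show 0 ≤ 1 - min 1 s by linarith) hm0 (by ring)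
    simp only [smul_eq_mul, mul_zero, zero_add, Real.exp_zero, mul_one, mul_neg] at hcv
    have : Real.exp (-s * x) ≤ Real.exp (-min 1 s) := by
      apply Real.exp_le_exp.mpr
      have : min 1 s ≤ s := min_le_right _ _
      nlinarith
    linarith
  · apply Real.exp_le_exp.mpr
    rw [Real.rpow_one]
    have := mul_le_mul_of_nonneg_left h1 (mul_nonneg one_sub_inv_e.le hm0)
    nlinarith

lemma laplace_lt (hα : 0 < α) (hz : IsScenery d α μ z) {β : ℝ} (hβ : α < β) :
    ∃ c : ℝ, 0 < c ∧ ∀ s, 0 ≤ s → ∀ y, mgf (z y) μ (-s) ≤ Real.exp (-(c * (min 1 s) ^ β)) := by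
  obtain ⟨c, hc, h⟩ := tail_lower hα hz hβ
  refine ⟨(1 - Real.exp (-1)) * c, mul_pos one_sub_inv_e hc, fun s hs y => ?_⟩
  have hm1 : min 1 s ≤ 1 := min_le_left _ _
  rcases eq_or_lt_of_le hs with rfl | hs'
  · have := hz.prob
    simp [Real.zero_rpow (show β ≠ 0 by linarith)]
  have hm0 : 0 < min 1 s := lt_min zero_lt_one hs'
  refine (lap_le hz (κ := 1 - Real.exp (-1)) (r := (min 1 s)⁻¹) hs (fun x hx => ?_) y).trans ?_
  · have : 1 ≤ s * x := by
      have h1 : 1 ≤ min 1 s * x := by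
        rw [inv_lt_iff_one_lt_mul₀ hm0] at hx; linarith
      have : min 1 s ≤ s := min_le_right _ _
      have : 0 < x := (inv_pos.mpr hm0).trans hx
      nlinarith
    rw [sub_sub_cancel]
    apply Real.exp_le_exp.mpr; linarith
  · apply Real.exp_le_exp.mpr
    have h1 := h (min 1 s)⁻¹ ((one_le_inv₀ hm0).mpr hm1)
    rw [Real.inv_rpow hm0.le, Real.rpow_neg hm0.le, inv_inv] at h1
    have := mul_le_mul_of_nonneg_left h1 one_sub_inv_e.le
    nlinarith

end scen

end

section
open MeasureTheory ProbabilityTheory Filter Set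
open scoped ENNReal

noncomputable def kq (t : ℝ) (x : ℝ) : ℝ≥0∞ :=
  (Icc 0 t).indicator (fun x => ENNReal.ofReal (qq x)) x

lemma kq_meas (t : ℝ) : Measurable (kq t) := by
  have h : ContinuousOn (fun x => ENNReal.ofReal (qq x)) (Icc 0 t) :=
    ENNReal.continuous_ofReal.comp_continuousOn (qq_continuousOn.mono fun x hx => hx.1)
  classical
  have := (h.measurable_piecewise (g := fun _ => (0 : ℝ≥0∞)) continuousOn_const measurableSet_Icc)
  have e : kq t = (Icc 0 t).piecewise (fun x => ENNReal.ofReal (qq x)) (fun _ => 0) :=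
    (Set.piecewise_eq_indicator (s := Icc 0 t) (f := fun x => ENNReal.ofReal (qq x))).symm
  rw [e]; exact this

noncomputable def gq (t : ℝ) : ℝ≥0∞ := ∫⁻ x, kq t x

lemma gq_eq (t : ℝ) : gq t = ∫⁻ x in Icc 0 t, ENNReal.ofReal (qq x) := by
  unfold gq kq
  exact lintegral_indicator measurableSet_Icc _

lemma chain_meas (t : ℝ) (n : ℕ) : Measurable fun u : Fin (n + 1) → ℝ =>
    ∏ i : Fin n, kq t (u i.succ - u i.castSucc) :=
  Finset.measurable_fun_prod _ fun i _ =>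
    (kq_meas t).comp ((measurable_pi_apply _).sub (measurable_pi_apply _))

lemma chain_int (t : ℝ) (n : ℕ) :
    ∫⁻ u : Fin (n + 1) → ℝ, ∏ i : Fin n, kq t (u i.succ - u i.castSucc)
      ∂(Measure.pi fun _ => volume.restrict (Ioc 0 t)) ≤ ENNReal.ofReal t * gq t ^ n := by
  induction n with
  | zero => simp [Measure.pi_univ]
  | succ n ih =>
    have mp := (measurePreserving_piFinSuccAbove
      (fun _ : Fin (n + 2) => (volume : Measure ℝ).restrict (Ioc 0 t)) 0).symm
    rw [← mp.lintegral_comp (chain_meas t (n + 1)), lintegral_prod_symm]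
    · calc _ ≤ ∫⁻ u : Fin (n + 1) → ℝ, gq t * ∏ i : Fin n, kq t (u i.succ - u i.castSucc)
          ∂(Measure.pi fun _ => volume.restrict (Ioc 0 t)) := by
            refine lintegral_mono fun u => ?_
            have e : ∀ a : ℝ, ∏ i : Fin (n + 1), kq t
                ((MeasurableEquiv.piFinSuccAbove (fun _ : Fin (n + 2) => ℝ) 0).symm (a, u) i.succ -
                (MeasurableEquiv.piFinSuccAbove (fun _ : Fin (n + 2) => ℝ) 0).symm (a, u) i.castSucc)
                = kq t (u 0 - a) * ∏ i : Fin n, kq t (u i.succ - u i.castSucc) := by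
              intro a
              have e2 : (MeasurableEquiv.piFinSuccAbove (fun _ : Fin (n + 2) => ℝ) 0).symm (a, u)
                  = Fin.cons a u := by
                simp [MeasurableEquiv.piFinSuccAbove]
                rfl
              rw [e2]
              simp only [Fin.prod_univ_succ, Fin.cons_succ, Fin.castSucc_zero, Fin.cons_zero,
                ← Fin.succ_castSucc]
            simp only [e]
            have hm : Measurable fun a => kq t (u 0 - a) :=
              (kq_meas t).comp (measurable_const.sub measurable_id)
            rw [lintegral_mul_const _ hm]
            gcongr
            refine (setLIntegral_le_lintegral _ _).trans (le_of_eq ?_)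
            exact lintegral_sub_left_eq_self (kq t) (u 0)
        _ = gq t * ∫⁻ u : Fin (n + 1) → ℝ, ∏ i : Fin n, kq t (u i.succ - u i.castSucc)
          ∂(Measure.pi fun _ => volume.restrict (Ioc 0 t)) := lintegral_const_mul _ (chain_meas t n)
        _ ≤ gq t * (ENNReal.ofReal t * gq t ^ n) := by gcongr
        _ = _ := by ring
    · exact ((chain_meas t (n + 1)).comp (MeasurableEquiv.measurable _)).aemeasurable

lemma chain_perm (t : ℝ) (n : ℕ) (σ : Equiv.Perm (Fin (n + 1))) :
    ∫⁻ u : Fin (n + 1) → ℝ, ∏ i : Fin n, kq t (u (σ i.succ) - u (σ i.castSucc))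
      ∂(Measure.pi fun _ => volume.restrict (Ioc 0 t)) ≤ ENNReal.ofReal t * gq t ^ n := by
  have mp := measurePreserving_piCongrLeft
    (fun _ : Fin (n + 1) => (volume : Measure ℝ).restrict (Ioc 0 t)) σ.symm
  refine le_trans (le_of_eq ?_) (chain_int t n)
  rw [← mp.lintegral_comp (chain_meas t n)]
  refine lintegral_congr fun u => ?_
  refine Finset.prod_congr rfl fun i _ => ?_
  have e : ∀ j, (MeasurableEquiv.piCongrLeft (fun _ : Fin (n + 1) => ℝ) σ.symm) u j = u (σ j) := by
    intro j
    have := Equiv.piCongrLeft_apply_apply (fun _ : Fin (n + 1) => ℝ) σ.symm u (σ j)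
    rw [Equiv.symm_apply_apply] at this
    exact this
  rw [e, e]

section walk
variable {d : ℕ} {Ω : Type*} [MeasurableSpace Ω] {P : (Fin (d + 1) → ℤ) → Measure Ω}
  {S : ℝ → Ω → (Fin (d + 1) → ℤ)}

lemma prob_coincide_sort (hd : 1 ≤ d) (hS : IsCTSRW (d + 1) P S) {n : ℕ} {t : ℝ}
    (u : Fin (n + 1) → ℝ) (hu : ∀ i, u i ∈ Ioc 0 t) :
    P 0 {ω | ∀ i j, tl S (u i) ω = tl S (u j) ω} ≤
      ∑ σ : Equiv.Perm (Fin (n + 1)), ∏ i : Fin n, kq t (u (σ i.succ) - u (σ i.castSucc)) := by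
  have hmono := Tuple.monotone_sort u
  set σ := Tuple.sort u
  calc _ ≤ P 0 {ω | ∀ i j, tl S ((u ∘ σ) i) ω = tl S ((u ∘ σ) j) ω} :=
        measure_mono fun ω (hω : ∀ i j, tl S (u i) ω = tl S (u j) ω) i j => hω _ _
    _ ≤ ∏ i : Fin n, ENNReal.ofReal (qq ((u ∘ σ) i.succ - (u ∘ σ) i.castSucc)) :=
        prob_coincide hd hS _ (hu _).1.le fun i => hmono (Fin.castSucc_lt_succ).le
    _ = ∏ i : Fin n, kq t (u (σ i.succ) - u (σ i.castSucc)) := by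
        refine Finset.prod_congr rfl fun i _ => ?_
        unfold kq
        rw [indicator_of_mem]
        · rfl
        · have h1 : u (σ i.castSucc) ≤ u (σ i.succ) := hmono (Fin.castSucc_lt_succ (i := i)).le
          exact ⟨by linarith, by linarith [(hu (σ i.succ)).2, (hu (σ i.castSucc)).1]⟩
    _ ≤ _ := Finset.single_le_sum (f := fun σ : Equiv.Perm (Fin (n + 1)) =>
        ∏ i : Fin n, kq t (u (σ i.succ) - u (σ i.castSucc))) (fun _ _ => zero_le) (Finset.mem_univ σ)

/-- local time -/
noncomputable def locT (S : ℝ → Ω → (Fin (d + 1) → ℤ)) (t : ℝ) (y : Fin d → ℤ) (ω : Ω) : ℝ≥0∞ :=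
  (volume.restrict (Ioc 0 t)) {u | tl S u ω = y}

lemma tl_meas_u (hS : IsCTSRW (d + 1) P S) (ω : Ω) : Measurable fun u => tl S u ω :=
  (tl_meas hS.meas).comp (measurable_id.prodMk measurable_const)

lemma locT_meas (hS : IsCTSRW (d + 1) P S) (t : ℝ) (y : Fin d → ℤ) : Measurable (locT S t y) := by
  have h := AF_meas hS (fun x => ({y} : Set (Fin d → ℤ)).indicator 1 x) t
  have e : locT S t y = AF S (fun x => ({y} : Set (Fin d → ℤ)).indicator 1 x) t := by
    ext ω
    unfold locT AF
    exact (lintegral_indicator_one (μ := volume.restrict (Ioc 0 t))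
      (tl_meas_u hS ω (measurableSet_singleton y))).symm
  rw [e]; exact h

lemma AF_eq_locT (hS : IsCTSRW (d + 1) P S) (f : (Fin d → ℤ) → ℝ≥0∞) (t : ℝ) (ω : Ω) :
    AF S f t ω = ∑' y, f y * locT S t y ω := by
  unfold AF locT
  rw [← lintegral_map (measurable_of_countable f) (tl_meas_u hS ω), lintegral_countable']
  refine tsum_congr fun y => ?_
  rw [Measure.map_apply (tl_meas_u hS ω) (measurableSet_singleton y)]
  rfl

lemma locT_sum (hS : IsCTSRW (d + 1) P S) (t : ℝ) (ω : Ω) : ∑' y, locT S t y ω = ENNReal.ofReal t := by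
  have := AF_eq_locT hS (fun _ => 1) t ω
  simp only [one_mul] at this
  rw [← this]
  simp [AF]

lemma locT_le (hS : IsCTSRW (d + 1) P S) (t : ℝ) (y) (ω : Ω) : locT S t y ω ≤ ENNReal.ofReal t := by
  rw [← locT_sum hS t ω]; exact ENNReal.le_tsum y

lemma locT_pow (hS : IsCTSRW (d + 1) P S) (n : ℕ) (t : ℝ) (ω : Ω) :
    ∑' y, locT S t y ω ^ (n + 1) = (Measure.pi fun _ : Fin (n + 1) => volume.restrict (Ioc 0 t))
      {u | ∀ i j, tl S (u i) ω = tl S (u j) ω} := by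
  have e : {u : Fin (n + 1) → ℝ | ∀ i j, tl S (u i) ω = tl S (u j) ω} =
      ⋃ y, Set.pi univ fun _ => {v | tl S v ω = y} := by
    ext u
    simp only [mem_ofPred_eq, mem_iUnion, Set.mem_pi, mem_univ, true_imp_iff]
    exact ⟨fun h => ⟨tl S (u 0) ω, fun i => h i 0⟩, fun ⟨y, h⟩ i j => (h i).trans (h j).symm⟩
  rw [e, measure_iUnion]
  · refine tsum_congr fun y => ?_
    rw [Measure.pi_pi]; simp [locT]
  · intro y y' hy
    rw [Function.onFun, Set.disjoint_left]
    intro u h1 h2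
    exact hy ((h1 0 (mem_univ _)).symm.trans (h2 0 (mem_univ _)))
  · exact fun y => MeasurableSet.univ_pi fun _ => tl_meas_u hS ω (measurableSet_singleton y)

lemma locT_pow_exp (hd : 1 ≤ d) (hS : IsCTSRW (d + 1) P S) (n : ℕ) (t : ℝ) :
    ∫⁻ ω, ∑' y, locT S t y ω ^ (n + 1) ∂ P 0 ≤
      (n + 1).factorial * (ENNReal.ofReal t * gq t ^ n) := by
  have := hS.prob 0
  simp_rw [locT_pow hS]
  set ν := Measure.pi fun _ : Fin (n + 1) => (volume : Measure ℝ).restrict (Ioc 0 t) with hν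
  have hE : MeasurableSet {p : Ω × (Fin (n + 1) → ℝ) |
      ∀ i j, tl S (p.2 i) p.1 = tl S (p.2 j) p.1} := by
    have hm : ∀ i : Fin (n + 1), Measurable fun p : Ω × (Fin (n + 1) → ℝ) => tl S (p.2 i) p.1 :=
      fun i => by
        have h2 : Measurable fun p : Ω × (Fin (n + 1) → ℝ) => (p.2 i, p.1) :=
          ((measurable_pi_apply i).comp measurable_snd).prodMk measurable_fst
        exact (tl_meas hS.meas).comp h2
    simp only [ofPred_forall]
    exact MeasurableSet.iInter fun i => MeasurableSet.iInter fun j =>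
      measurableSet_eq_fun (hm i) (hm j)
  have h1 : ∫⁻ ω, ν {u | ∀ i j, tl S (u i) ω = tl S (u j) ω} ∂ P 0 =
      ∫⁻ u, P 0 {ω | ∀ i j, tl S (u i) ω = tl S (u j) ω} ∂ν := by
    refine (Measure.prod_apply (μ := P 0) (ν := ν) hE).symm.trans ?_
    exact Measure.prod_apply_symm hE
  rw [h1]
  have hae : ∀ᵐ u ∂ν, ∀ i, u i ∈ Ioc 0 t := by
    rw [ae_all_iff]
    intro i
    have : ∀ᵐ v ∂(volume : Measure ℝ).restrict (Ioc 0 t), v ∈ Ioc 0 t :=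
      ae_restrict_mem measurableSet_Ioc
    exact Measure.tendsto_eval_ae_ae.eventually this
  calc _ ≤ ∫⁻ u, ∑ σ : Equiv.Perm (Fin (n + 1)),
        ∏ i : Fin n, kq t (u (σ i.succ) - u (σ i.castSucc)) ∂ν := by
        refine lintegral_mono_ae ?_
        filter_upwards [hae] with u hu
        exact prob_coincide_sort hd hS u hu
    _ = ∑ σ : Equiv.Perm (Fin (n + 1)), ∫⁻ u,
        ∏ i : Fin n, kq t (u (σ i.succ) - u (σ i.castSucc)) ∂ν := by
        refine lintegral_finsetSum _ fun σ _ => ?_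
        exact Finset.measurable_fun_prod _ fun i _ =>
          (kq_meas t).comp ((measurable_pi_apply _).sub (measurable_pi_apply _))
    _ ≤ ∑ σ : Equiv.Perm (Fin (n + 1)), (ENNReal.ofReal t * gq t ^ n) :=
        Finset.sum_le_sum fun σ _ => chain_perm t n σ
    _ = _ := by
        rw [Finset.sum_const, Finset.card_univ, Fintype.card_perm, Fintype.card_fin, nsmul_eq_mul]

end walk

lemma gq_le : ∃ C > 0, ∀ t > 0, gq t ≤ ENNReal.ofReal (C * t ^ (1 / 2 : ℝ)) := by
  obtain ⟨C, hC, h⟩ := qq_upper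
  refine ⟨2 * C, by positivity, fun t ht => ?_⟩
  rw [gq_eq, setLIntegral_congr Ioc_ae_eq_Icc.symm]
  have hint : IntervalIntegrable (fun x : ℝ => C * x ^ (-(1 / 2) : ℝ)) volume 0 t :=
    (intervalIntegral.intervalIntegrable_rpow' (by norm_num)).const_mul _
  calc _ ≤ ∫⁻ x in Ioc 0 t, ENNReal.ofReal (C * x ^ (-(1 / 2) : ℝ)) :=
        setLIntegral_mono' measurableSet_Ioc fun x hx => ENNReal.ofReal_le_ofReal (h x hx.1)
    _ = ENNReal.ofReal (∫ x in Ioc 0 t, C * x ^ (-(1 / 2) : ℝ)) := by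
        rw [ofReal_integral_eq_lintegral_ofReal]
        · exact (intervalIntegrable_iff_integrableOn_Ioc_of_le ht.le).mp hint
        · filter_upwards [ae_restrict_mem measurableSet_Ioc] with x hx
          have := hx.1
          positivity
    _ ≤ _ := by
        apply ENNReal.ofReal_le_ofReal
        rw [← intervalIntegral.integral_of_le ht.le, intervalIntegral.integral_const_mul,
          integral_rpow (Or.inl (by norm_num))]
        norm_num
        apply le_of_eq; ring

end

section
open MeasureTheory ProbabilityTheory Filter Set
open scoped ENNReal

lemma good_finset {ι : Type*} (L : ι → ℝ≥0∞) {t M : ℝ} (ht : 0 < t) (hM : 0 < M)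
    (hs : ∑' y, L y = ENNReal.ofReal t)
    (h4 : ∑' y, L y ^ 4 ≤ ENNReal.ofReal (M ^ 3 * t / 4)) :
    ∃ F : Finset ι, (∀ y ∈ F, (L y).toReal ≤ M) ∧ t / 2 ≤ ∑ y ∈ F, (L y).toReal := by
  classical
  have hfin : ∀ y, L y ≠ ⊤ := fun y =>
    ne_top_of_le_ne_top ENNReal.ofReal_ne_top (hs ▸ ENNReal.le_tsum y)
  set lo : ι → ℝ≥0∞ := fun y => if L y ≤ ENNReal.ofReal M then L y else 0
  set hi : ι → ℝ≥0∞ := fun y => if L y ≤ ENNReal.ofReal M then 0 else L y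
  have hsplit : ∑' y, lo y + ∑' y, hi y = ENNReal.ofReal t := by
    rw [← ENNReal.tsum_add, ← hs]
    refine tsum_congr fun y => ?_
    simp only [lo, hi]; split_ifs <;> simp
  have hhi : ENNReal.ofReal (M ^ 3) * ∑' y, hi y ≤ ENNReal.ofReal (M ^ 3) * ENNReal.ofReal (t / 4) := by
    rw [← ENNReal.ofReal_mul (by positivity), ← ENNReal.tsum_mul_left]
    refine le_trans (ENNReal.tsum_le_tsum fun y => ?_) (h4.trans (le_of_eq (by congr 1; ring)))
    simp only [hi]
    split_ifs with h
    · simp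
    · push Not at h
      rw [pow_succ (L y), ENNReal.ofReal_pow hM.le]
      gcongr
  have hM3 : ENNReal.ofReal (M ^ 3) ≠ 0 := by
    rw [Ne, ENNReal.ofReal_eq_zero, not_le]; positivity
  have hhi' : ∑' y, hi y ≤ ENNReal.ofReal (t / 4) :=
    (ENNReal.mul_le_mul_iff_right hM3 ENNReal.ofReal_ne_top).mp hhi
  have hlo : ENNReal.ofReal (t / 2) < ∑' y, lo y := by
    by_contra hcon
    push Not at hcon
    have := add_le_add hcon hhi'
    rw [hsplit, ← ENNReal.ofReal_add (by positivity) (by positivity),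
      ENNReal.ofReal_le_ofReal_iff (by positivity)] at this
    linarith
  rw [ENNReal.tsum_eq_iSup_sum, lt_iSup_iff] at hlo
  obtain ⟨F, hF⟩ := hlo
  refine ⟨F.filter fun y => L y ≤ ENNReal.ofReal M, fun y hy => ?_, ?_⟩
  · exact ENNReal.toReal_le_of_le_ofReal hM.le (Finset.mem_filter.mp hy).2
  · rw [← ENNReal.toReal_sum fun y _ => hfin y]
    rw [← ENNReal.ofReal_le_iff_le_toReal (ENNReal.sum_ne_top.mpr fun y _ => hfin y)]
    refine hF.le.trans (le_of_eq ?_)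
    rw [Finset.sum_filter]

lemma exp_poly {a δ : ℝ} (ha : 0 < a) : ∃ C > 0, ∀ t : ℝ, 1 ≤ t →
    Real.exp (-(a * t ^ (1 / 10 : ℝ))) ≤ C * t ^ (-δ) := by
  obtain ⟨k, hk⟩ := exists_nat_ge (10 * δ)
  refine ⟨k.factorial / a ^ k, by positivity, fun t ht => ?_⟩
  have h0 : 0 < t := by linarith
  have hx : 0 < a * t ^ (1 / 10 : ℝ) := by positivity
  have h := Real.pow_div_factorial_le_exp _ hx.le k
  rw [Real.exp_neg, Real.rpow_neg h0.le]
  have e : (a * t ^ (1 / 10 : ℝ)) ^ k = a ^ k * t ^ (k / 10 : ℝ) := by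
    rw [mul_pow, ← Real.rpow_natCast (t ^ (1 / 10 : ℝ)), ← Real.rpow_mul h0.le]
    congr 2; ring
  rw [e] at h
  have h2 : t ^ δ ≤ t ^ (k / 10 : ℝ) := Real.rpow_le_rpow_of_exponent_le ht (by linarith)
  have h3 : a ^ k * t ^ δ / k.factorial ≤ Real.exp (a * t ^ (1 / 10 : ℝ)) := by
    refine le_trans ?_ h
    gcongr
  have h4 : (k.factorial : ℝ) / a ^ k * (t ^ δ)⁻¹ = (a ^ k * t ^ δ / k.factorial)⁻¹ := by
    field_simp
  rw [h4]
  exact inv_anti₀ (by positivity) h3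

section scen
variable {d : ℕ} {α : ℝ} {Ωz : Type*} [MeasurableSpace Ωz] {μ : Measure Ωz}
  {z : (Fin d → ℤ) → Ωz → ℝ}

lemma min_pow_bound {β M l x : ℝ} (hβ0 : 0 < β) (hβ1 : β ≤ 1) (hM : 0 < M) (hl : 0 ≤ l)
    (hlM : l ≤ M) (hx : 0 ≤ x) : (min 1 (x * M)) ^ β * (l / M) ≤ (min 1 (x * l)) ^ β := by
  have hq : l / M ≤ 1 := (div_le_one hM).mpr hlM
  have hq0 : 0 ≤ l / M := by positivity
  have hm : 0 ≤ min 1 (x * M) := le_min zero_le_one (by positivity)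
  have h1 : min 1 (x * M) * (l / M) ≤ min 1 (x * l) := by
    refine le_min ?_ ?_
    · exact mul_le_one₀ (min_le_left _ _) hq0 hq
    · calc _ ≤ x * M * (l / M) := by gcongr; exact min_le_right _ _
        _ = _ := by field_simp
  calc _ ≤ (min 1 (x * M)) ^ β * (l / M) ^ β := by
        gcongr
        exact Real.self_le_rpow_of_le_one hq0 hq hβ1
    _ = (min 1 (x * M) * (l / M)) ^ β := (Real.mul_rpow hm hq0).symm
    _ ≤ _ := by gcongr

lemma lap_sum (hz : IsScenery d α μ z) {β c : ℝ} (hβ0 : 0 < β) (hβ1 : β ≤ 1) (hc : 0 < c)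
    (hL : ∀ s, 0 ≤ s → ∀ y, mgf (z y) μ (-s) ≤ Real.exp (-(c * (min 1 s) ^ β)))
    {t M : ℝ} (hM : 0 < M) (F : Finset (Fin d → ℤ)) (l : (Fin d → ℤ) → ℝ)
    (hl : ∀ y, 0 ≤ l y) (hlM : ∀ y ∈ F, l y ≤ M) (hs : t / 2 ≤ ∑ y ∈ F, l y) {x : ℝ} (hx : 0 ≤ x) :
    ∫ ζ, Real.exp (-x * ∑ y ∈ F, l y * z y ζ) ∂μ ≤
      Real.exp (-(c * (t / (2 * M)) * (min 1 (x * M)) ^ β)) := by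
  have := hz.prob
  have hind : iIndepFun (fun y ζ => l y * z y ζ) μ :=
    hz.indep.comp (fun y v => l y * v) fun y => measurable_id.const_mul _
  have h1 := hind.mgf_sum (t := -x) (fun y => (hz.meas y).const_mul _) F
  have e1 : ∫ ζ, Real.exp (-x * ∑ y ∈ F, l y * z y ζ) ∂μ =
      mgf (∑ y ∈ F, fun ζ => l y * z y ζ) μ (-x) := by
    unfold mgf
    simp only [Finset.sum_apply]
  rw [e1, h1]
  have e2 : ∀ y, mgf (fun ζ => l y * z y ζ) μ (-x) = mgf (z y) μ (-(x * l y)) := by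
    intro y
    rw [mgf_const_mul]; congr 1; ring
  have hm : 0 ≤ (min 1 (x * M)) ^ β :=
    Real.rpow_nonneg (le_min zero_le_one (by positivity)) _
  calc ∏ y ∈ F, mgf (fun ζ => l y * z y ζ) μ (-x)
      ≤ ∏ y ∈ F, Real.exp (-(c * ((min 1 (x * M)) ^ β * (l y / M)))) := by
        refine Finset.prod_le_prod (fun y _ => mgf_nonneg) fun y hy => ?_
        rw [e2]
        refine (hL _ (mul_nonneg hx (hl y)) y).trans (Real.exp_le_exp.mpr ?_)
        have := min_pow_bound hβ0 hβ1 hM (hl y) (hlM y hy) hx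
        have := mul_le_mul_of_nonneg_left this hc.le
        linarith
    _ = Real.exp (∑ y ∈ F, -(c * ((min 1 (x * M)) ^ β * (l y / M)))) := (Real.exp_sum _ _).symm
    _ ≤ _ := by
        apply Real.exp_le_exp.mpr
        rw [Finset.sum_neg_distrib, ← Finset.mul_sum, ← Finset.mul_sum, ← Finset.sum_div]
        apply neg_le_neg
        have h5 : t / (2 * M) ≤ (∑ y ∈ F, l y) / M := by
          rw [← div_div]; gcongr
        calc c * (t / (2 * M)) * min 1 (x * M) ^ β = c * (min 1 (x * M) ^ β * (t / (2 * M))) := by ring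
          _ ≤ _ := by gcongr

end scen

end

section
open MeasureTheory ProbabilityTheory Filter Set
open scoped ENNReal

lemma stretched {p b : ℝ} (hp : 0 < p) (hb : 0 < b) :
    ∫⁻ θ : ℝ in Ioc (-Real.pi) Real.pi, ENNReal.ofReal (Real.exp (-b * |θ| ^ p)) ≤
      ENNReal.ofReal (2 * (b ^ (-1 / p) * Real.Gamma (1 / p + 1))) := by
  refine (setLIntegral_le_lintegral _ _).trans ?_
  have h1 : ∫ θ : ℝ, Real.exp (-b * |θ| ^ p) = 2 * (b ^ (-1 / p) * Real.Gamma (1 / p + 1)) := by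
    rw [← integral_exp_neg_mul_rpow hp hb]
    exact integral_comp_abs (f := fun x => Real.exp (-b * x ^ p))
  have hpos : 0 < 2 * (b ^ (-1 / p) * Real.Gamma (1 / p + 1)) := by
    have := Real.Gamma_pos_of_pos (show 0 < 1 / p + 1 by positivity)
    positivity
  have hint : Integrable fun θ : ℝ => Real.exp (-b * |θ| ^ p) := by
    by_contra hcon
    rw [integral_undef hcon] at h1
    linarith
  rw [← h1, ofReal_integral_eq_lintegral_ofReal hint (ae_of_all _ fun _ => (Real.exp_pos _).le)]

lemma exp_min {k y β : ℝ} : Real.exp (-(k * (min 1 y) ^ β)) ≤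
    Real.exp (-k) + Real.exp (-(k * y ^ β)) := by
  rcases le_total 1 y with h | h
  · rw [min_eq_left h, Real.one_rpow, mul_one]
    linarith [Real.exp_pos (-(k * y ^ β))]
  · rw [min_eq_right h]
    linarith [Real.exp_pos (-k)]

section scen
variable {d : ℕ} {α : ℝ} {Ωz : Type*} [MeasurableSpace Ωz] {μ : Measure Ωz}
  {z : (Fin d → ℤ) → Ωz → ℝ}

lemma annealed_F0 (hz : IsScenery d α μ z) {β c : ℝ} (hβ0 : 0 < β) (hβ1 : β ≤ 1) (hc : 0 < c)
    (hL : ∀ s, 0 ≤ s → ∀ y, mgf (z y) μ (-s) ≤ Real.exp (-(c * (min 1 s) ^ β)))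
    {t M : ℝ} (ht : 0 < t) (hM : 0 < M) (F : Finset (Fin d → ℤ)) (l : (Fin d → ℤ) → ℝ)
    (hl : ∀ y, 0 ≤ l y) (hlM : ∀ y ∈ F, l y ≤ M) (hs : t / 2 ≤ ∑ y ∈ F, l y) :
    ∫⁻ ζ, ENNReal.ofReal (qq (∑ y ∈ F, l y * z y ζ)) ∂μ ≤
      ENNReal.ofReal (Real.exp (-(c * (t / (2 * M)))) + (2 * Real.pi)⁻¹ *
      (2 * ((c * (t / (2 * M)) * (4 / Real.pi ^ 2 * M) ^ β) ^ (-1 / (2 * β)) *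
        Real.Gamma (1 / (2 * β) + 1)))) := by
  have := hz.prob
  have hpi := Real.pi_pos
  set k := c * (t / (2 * M)) with hk
  have hkp : 0 < k := by positivity
  set A : Ωz → ℝ := fun ζ => ∑ y ∈ F, l y * z y ζ with hA
  have hA0 : ∀ ζ, 0 ≤ A ζ := fun ζ => Finset.sum_nonneg fun y _ => mul_nonneg (hl y) (hz.nonneg y ζ)
  have hAm : Measurable A := Finset.measurable_fun_sum _ fun y _ => (hz.meas y).const_mul _
  have hG : 0 < Real.Gamma (1 / (2 * β) + 1) := Real.Gamma_pos_of_pos (by positivity)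
  set b := k * (4 / Real.pi ^ 2 * M) ^ β with hb
  have hbp : 0 < b := by positivity
  calc ∫⁻ ζ, ENNReal.ofReal (qq (A ζ)) ∂μ
      ≤ ∫⁻ ζ, ENNReal.ofReal (2 * Real.pi)⁻¹ * (∫⁻ θ in Ioc (-Real.pi) Real.pi,
          ENNReal.ofReal (Real.exp (-(4 / Real.pi ^ 2 * θ ^ 2) * A ζ))) ∂μ := by
        refine lintegral_mono fun ζ => ?_
        refine (ENNReal.ofReal_le_ofReal (qq_le_gauss (hA0 ζ))).trans (le_of_eq ?_)
        rw [ENNReal.ofReal_mul (by positivity), intervalIntegral.integral_of_le (by linarith),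
          ofReal_integral_eq_lintegral_ofReal]
        · congr 1
          refine lintegral_congr fun θ => ?_
          congr 2; ring
        · exact Continuous.integrableOn_Ioc (by fun_prop)
        · exact ae_of_all _ fun _ => (Real.exp_pos _).le
    _ = ENNReal.ofReal (2 * Real.pi)⁻¹ * ∫⁻ θ in Ioc (-Real.pi) Real.pi, ∫⁻ ζ,
          ENNReal.ofReal (Real.exp (-(4 / Real.pi ^ 2 * θ ^ 2) * A ζ)) ∂μ := by
        rw [lintegral_const_mul' _ _ ENNReal.ofReal_ne_top, lintegral_lintegral_swap]
        refine Measurable.aemeasurable ?_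
        have h1 : Measurable fun p : Ωz × ℝ => A p.1 := hAm.comp measurable_fst
        have h2 : Measurable fun p : Ωz × ℝ => p.2 := measurable_snd
        exact (((((h2.pow_const 2).const_mul _).neg).mul h1).exp).ennreal_ofReal
    _ ≤ ENNReal.ofReal (2 * Real.pi)⁻¹ * ∫⁻ θ in Ioc (-Real.pi) Real.pi,
          (ENNReal.ofReal (Real.exp (-k)) + ENNReal.ofReal (Real.exp (-b * |θ| ^ (2 * β)))) := by
        gcongr with θ
        have hx : 0 ≤ 4 / Real.pi ^ 2 * θ ^ 2 := by positivity
        have h1 := lap_sum hz hβ0 hβ1 hc hL hM F l hl hlM hs hx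
        have hint : Integrable (fun ζ => Real.exp (-(4 / Real.pi ^ 2 * θ ^ 2) * A ζ)) μ := by
          refine Integrable.of_bound (C := 1) (hAm.const_mul _).exp.aestronglyMeasurable
            (ae_of_all _ fun ζ => ?_)
          rw [Real.norm_eq_abs, abs_of_pos (Real.exp_pos _), Real.exp_le_one_iff]
          have := mul_nonneg hx (hA0 ζ)
          linarith
        rw [← ofReal_integral_eq_lintegral_ofReal hint (ae_of_all _ fun _ => (Real.exp_pos _).le),
          ← ENNReal.ofReal_add (Real.exp_pos _).le (Real.exp_pos _).le]
        apply ENNReal.ofReal_le_ofReal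
        refine (h1.trans exp_min).trans (le_of_eq ?_)
        congr 2
        rw [hb, show 4 / Real.pi ^ 2 * θ ^ 2 * M = (4 / Real.pi ^ 2 * M) * |θ| ^ (2 : ℝ) by
          rw [Real.rpow_two, sq_abs]; ring, Real.mul_rpow (by positivity) (by positivity),
          ← Real.rpow_mul (abs_nonneg θ)]
        ring
    _ ≤ ENNReal.ofReal (2 * Real.pi)⁻¹ * (ENNReal.ofReal (Real.exp (-k)) *
          ENNReal.ofReal (2 * Real.pi) +
          ENNReal.ofReal (2 * (b ^ (-1 / (2 * β)) * Real.Gamma (1 / (2 * β) + 1)))) := by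
        gcongr
        rw [lintegral_add_left measurable_const, lintegral_const]
        gcongr
        · simp only [Measure.restrict_apply MeasurableSet.univ, univ_inter, Real.volume_Ioc]
          apply ENNReal.ofReal_le_ofReal; linarith
        · exact stretched (by positivity) hbp
    _ = _ := by
        rw [← ENNReal.ofReal_mul (by positivity), ← ENNReal.ofReal_add (by positivity) (by positivity),
          ← ENNReal.ofReal_mul (by positivity)]
        congr 1
        field_simp

lemma annealed_F (hz : IsScenery d α μ z) {β c : ℝ} (hβ0 : 0 < β) (hβ1 : β ≤ 1) (hc : 0 < c)
    (hL : ∀ s, 0 ≤ s → ∀ y, mgf (z y) μ (-s) ≤ Real.exp (-(c * (min 1 s) ^ β))) :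
    ∃ C > 0, ∀ t, 1 ≤ t → ∀ (F : Finset (Fin d → ℤ)) (l : (Fin d → ℤ) → ℝ),
    (∀ y, 0 ≤ l y) → (∀ y ∈ F, l y ≤ t ^ (9 / 10 : ℝ)) → t / 2 ≤ ∑ y ∈ F, l y →
    ∫⁻ ζ, ENNReal.ofReal (qq (∑ y ∈ F, l y * z y ζ)) ∂μ ≤
      ENNReal.ofReal (C * t ^ (-(9 / 20 + 1 / (20 * β)))) := by
  obtain ⟨C1, hC1, h1⟩ := exp_poly (a := c / 2) (δ := 9 / 20 + 1 / (20 * β)) (by positivity)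
  have hpi := Real.pi_pos
  have hG : 0 < Real.Gamma (1 / (2 * β) + 1) := Real.Gamma_pos_of_pos (by positivity)
  set C2 : ℝ := (2 * Real.pi)⁻¹ * (2 * ((c / 2 * (4 / Real.pi ^ 2) ^ β) ^ (-1 / (2 * β)) *
        Real.Gamma (1 / (2 * β) + 1))) with hC2
  have hC2p : 0 < C2 := by positivity
  refine ⟨C1 + C2, by positivity, fun t ht F l hl hlM hs => ?_⟩
  have h0 : 0 < t := by linarith
  refine (annealed_F0 hz hβ0 hβ1 hc hL h0 (by positivity) F l hl hlM hs).trans ?_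
  apply ENNReal.ofReal_le_ofReal
  have e1 : c * (t / (2 * t ^ (9 / 10 : ℝ))) = c / 2 * t ^ (1 / 10 : ℝ) := by
    have : t = t ^ (9 / 10 : ℝ) * t ^ (1 / 10 : ℝ) := by
      rw [← Real.rpow_add h0]; norm_num
    have hp : 0 < t ^ (9 / 10 : ℝ) := by positivity
    field_simp
    linarith
  rw [e1, add_mul]
  refine add_le_add (h1 t ht) (le_of_eq ?_)
  have e2 : c / 2 * t ^ (1 / 10 : ℝ) * (4 / Real.pi ^ 2 * t ^ (9 / 10 : ℝ)) ^ β =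
      (c / 2 * (4 / Real.pi ^ 2) ^ β) * t ^ (1 / 10 + 9 / 10 * β) := by
    rw [Real.mul_rpow (by positivity) (by positivity), ← Real.rpow_mul h0.le, Real.rpow_add h0]
    ring
  rw [e2, Real.mul_rpow (by positivity) (by positivity), ← Real.rpow_mul h0.le, hC2]
  have e3 : (1 / 10 + 9 / 10 * β) * (-1 / (2 * β)) = -(9 / 20 + 1 / (20 * β)) := by
    field_simp; ring
  rw [e3]; ring

end scen

end

section
open MeasureTheory ProbabilityTheory Filter Set
open scoped ENNReal

noncomputable def QQ (a : ℝ≥0∞) : ℝ≥0∞ := if a = ⊤ then 0 else ENNReal.ofReal (qq a.toReal)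

lemma qq_toReal_meas : Measurable fun a : ℝ≥0∞ => ENNReal.ofReal (qq a.toReal) := by
  have h1 : Continuous fun x : ℝ => qq (max 0 x) :=
    qq_continuousOn.comp_continuous (by fun_prop) fun x => mem_Ici.mpr (le_max_left _ _)
  have h2 : Measurable fun a : ℝ≥0∞ => qq (max 0 a.toReal) :=
    h1.measurable.comp ENNReal.measurable_toReal
  simp only [max_eq_right ENNReal.toReal_nonneg] at h2
  exact h2.ennreal_ofReal

lemma QQ_meas : Measurable QQ := by
  unfold QQ
  exact Measurable.ite (measurableSet_singleton ⊤) measurable_const qq_toReal_meas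

lemma QQ_le_one (a : ℝ≥0∞) : QQ a ≤ 1 := by
  unfold QQ
  split_ifs
  · simp
  · exact ENNReal.ofReal_le_one.mpr (qq_le_one ENNReal.toReal_nonneg)

lemma QQ_le {a : ℝ≥0∞} {x : ℝ} (hx : 0 ≤ x) (h : ENNReal.ofReal x ≤ a) :
    QQ a ≤ ENNReal.ofReal (qq x) := by
  unfold QQ
  split_ifs with ha
  · simp
  · exact ENNReal.ofReal_le_ofReal (qq_anti hx ((ENNReal.ofReal_le_iff_le_toReal ha).mp h))

/-- scenery as an extended nonnegative function -/
noncomputable def zf {d : ℕ} {Ωz : Type*} (z : (Fin d → ℤ) → Ωz → ℝ) (ζ : Ωz) (y : Fin d → ℤ) :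
    ℝ≥0∞ := ENNReal.ofReal (z y ζ)

section both
variable {d : ℕ} {α : ℝ} {Ωz : Type*} [MeasurableSpace Ωz] {μ : Measure Ωz}
  {z : (Fin d → ℤ) → Ωz → ℝ}
  {Ω : Type*} [MeasurableSpace Ω] {P : (Fin (d + 1) → ℤ) → Measure Ω}
  {S : ℝ → Ω → (Fin (d + 1) → ℤ)}

lemma AF_joint (hz : IsScenery d α μ z) (hS : IsCTSRW (d + 1) P S) :
    Measurable fun p : (Ωz × ℝ) × Ω => AF S (zf z p.1.1) p.1.2 p.2 := by
  have e : (fun p : (Ωz × ℝ) × Ω => AF S (zf z p.1.1) p.1.2 p.2) = fun p : (Ωz × ℝ) × Ω =>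
      ∫⁻ u, {q : ((Ωz × ℝ) × Ω) × ℝ | 0 < q.2 ∧ q.2 ≤ q.1.1.2}.indicator
        (fun q => zf z q.1.1.1 (tl S q.2 q.1.2)) (p, u) := by
    ext p
    unfold AF
    rw [← lintegral_indicator measurableSet_Ioc]
    rfl
  rw [e]
  refine Measurable.lintegral_prod_right' (f := {q : ((Ωz × ℝ) × Ω) × ℝ | 0 < q.2 ∧
    q.2 ≤ q.1.1.2}.indicator (fun q => zf z q.1.1.1 (tl S q.2 q.1.2))) ?_
  refine Measurable.indicator ?_ ?_
  · have h1 : Measurable fun p : Ωz × (Fin d → ℤ) => zf z p.1 p.2 :=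
      measurable_from_prod_countable_left fun y => (hz.meas y).ennreal_ofReal
    have h2 : Measurable fun q : ((Ωz × ℝ) × Ω) × ℝ => tl S q.2 q.1.2 := by
      have h3 : Measurable fun q : ((Ωz × ℝ) × Ω) × ℝ => (q.2, q.1.2) :=
        measurable_snd.prodMk (measurable_snd.comp measurable_fst)
      exact (tl_meas hS.meas).comp h3
    have h4 : Measurable fun q : ((Ωz × ℝ) × Ω) × ℝ => (q.1.1.1, tl S q.2 q.1.2) :=
      (measurable_fst.comp (measurable_fst.comp measurable_fst)).prodMk h2
    exact h1.comp h4
  · exact (measurableSet_lt measurable_const measurable_snd).inter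
      (measurableSet_le measurable_snd (measurable_snd.comp (measurable_fst.comp measurable_fst)))

/-- the return integrand -/
noncomputable def gg (P : (Fin (d + 1) → ℤ) → Measure Ω) (S : ℝ → Ω → (Fin (d + 1) → ℤ))
    (z : (Fin d → ℤ) → Ωz → ℝ) (ζ : Ωz) (t : ℝ) : ℝ≥0∞ :=
  ∫⁻ ω, {ω | tl S t ω = 0}.indicator (fun ω => QQ (AF S (zf z ζ) t ω)) ω ∂ P 0

lemma gg_meas (hz : IsScenery d α μ z) (hS : IsCTSRW (d + 1) P S) :
    Measurable fun p : Ωz × ℝ => gg P S z p.1 p.2 := by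
  have := hS.prob 0
  have h : Measurable ({q : (Ωz × ℝ) × Ω | tl S q.1.2 q.2 = 0}.indicator
      fun q => QQ (AF S (zf z q.1.1) q.1.2 q.2)) := by
    refine (QQ_meas.comp (AF_joint hz hS)).indicator ?_
    have h3 : Measurable fun q : (Ωz × ℝ) × Ω => (q.1.2, q.2) :=
      (measurable_snd.comp measurable_fst).prodMk measurable_snd
    exact ((tl_meas hS.meas).comp h3) (measurableSet_singleton 0)
  exact h.lintegral_prod_right'

lemma bad_prob (hd : 1 ≤ d) (hS : IsCTSRW (d + 1) P S) : ∃ C > 0, ∀ t : ℝ, 1 ≤ t →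
    P 0 {ω | ENNReal.ofReal ((t ^ (9 / 10 : ℝ)) ^ 3 * t / 4) ≤ ∑' y, locT S t y ω ^ 4} ≤
      ENNReal.ofReal (C * t ^ (-(6 / 5) : ℝ)) := by
  obtain ⟨C, hC, h⟩ := gq_le
  refine ⟨96 * C ^ 3, by positivity, fun t ht => ?_⟩
  have h0 : 0 < t := by linarith
  have hm : Measurable fun ω => ∑' y, locT S t y ω ^ 4 :=
    Measurable.ennreal_tsum fun y => (locT_meas hS t y).pow_const 4
  have hM := mul_meas_ge_le_lintegral (μ := P 0) hm (ENNReal.ofReal ((t ^ (9 / 10 : ℝ)) ^ 3 * t / 4))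
  have h3 := hM.trans (locT_pow_exp hd hS 3 t)
  have hpos : ENNReal.ofReal ((t ^ (9 / 10 : ℝ)) ^ 3 * t / 4) ≠ 0 := by
    rw [Ne, ENNReal.ofReal_eq_zero, not_le]; positivity
  rw [← ENNReal.mul_le_mul_iff_right hpos ENNReal.ofReal_ne_top]
  refine h3.trans ?_
  rw [← ENNReal.ofReal_mul (by positivity)]
  calc _ ≤ ENNReal.ofReal 24 * (ENNReal.ofReal t * ENNReal.ofReal (C * t ^ (1 / 2 : ℝ)) ^ 3) := by
        gcongr
        · simp [Nat.factorial]
        · exact h t h0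
    _ = ENNReal.ofReal (24 * (t * (C * t ^ (1 / 2 : ℝ)) ^ 3)) := by
        rw [← ENNReal.ofReal_pow (by positivity), ← ENNReal.ofReal_mul h0.le,
          ← ENNReal.ofReal_mul (by norm_num)]
    _ ≤ _ := by
        apply ENNReal.ofReal_le_ofReal
        apply le_of_eq
        have e1 : (t ^ (9 / 10 : ℝ)) ^ 3 = t ^ (27 / 10 : ℝ) := by
          rw [← Real.rpow_natCast, ← Real.rpow_mul h0.le]; norm_num
        have e2 : (t ^ (1 / 2 : ℝ)) ^ 3 = t ^ (3 / 2 : ℝ) := by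
          rw [← Real.rpow_natCast, ← Real.rpow_mul h0.le]; norm_num
        have e3 : t ^ (27 / 10 : ℝ) * t ^ (-(6 / 5) : ℝ) = t ^ (3 / 2 : ℝ) := by
          rw [← Real.rpow_add h0]; norm_num
        rw [mul_pow, e1, e2, ← e3]; ring

lemma annealed_t (hd : 1 ≤ d) (hz : IsScenery d α μ z) (hS : IsCTSRW (d + 1) P S) {C δ : ℝ}
    {t : ℝ} (ht : 1 ≤ t)
    (hC : ∀ (F : Finset (Fin d → ℤ)) (l : (Fin d → ℤ) → ℝ),
    (∀ y, 0 ≤ l y) → (∀ y ∈ F, l y ≤ t ^ (9 / 10 : ℝ)) → t / 2 ≤ ∑ y ∈ F, l y →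
    ∫⁻ ζ, ENNReal.ofReal (qq (∑ y ∈ F, l y * z y ζ)) ∂μ ≤ ENNReal.ofReal (C * t ^ (-δ))) :
    ∫⁻ ζ, gg P S z ζ t ∂μ ≤
      P 0 {ω | ENNReal.ofReal ((t ^ (9 / 10 : ℝ)) ^ 3 * t / 4) ≤ ∑' y, locT S t y ω ^ 4} +
      ENNReal.ofReal (C * t ^ (-δ)) * P 0 {ω | tl S t ω = 0} := by
  have := hS.prob 0
  have := hz.prob
  have h0 : 0 < t := by linarith
  have hAm : Measurable fun p : Ωz × Ω => AF S (zf z p.1) t p.2 := by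
    have h3 : Measurable fun q : Ωz × Ω => ((q.1, t), q.2) :=
      (measurable_fst.prodMk measurable_const).prodMk measurable_snd
    exact (AF_joint hz hS).comp h3
  have hT : MeasurableSet {ω | tl S t ω = 0} := meas_tl hS t (measurableSet_singleton 0)
  set B : Set Ω := {ω | ENNReal.ofReal ((t ^ (9 / 10 : ℝ)) ^ 3 * t / 4) ≤ ∑' y, locT S t y ω ^ 4}
    with hB
  have hBm : MeasurableSet B := measurableSet_le measurable_const
    (Measurable.ennreal_tsum fun y => (locT_meas hS t y).pow_const 4)
  have key : ∀ ω, ∫⁻ ζ, QQ (AF S (zf z ζ) t ω) ∂μ ≤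
      B.indicator 1 ω + ENNReal.ofReal (C * t ^ (-δ)) := by
    intro ω
    by_cases hω : ω ∈ B
    · rw [indicator_of_mem hω]
      refine le_trans (lintegral_mono fun ζ => QQ_le_one _) ?_
      simp
    · rw [indicator_of_notMem hω, zero_add]
      have hω' : ∑' y, locT S t y ω ^ 4 ≤ ENNReal.ofReal ((t ^ (9 / 10 : ℝ)) ^ 3 * t / 4) :=
        (not_le.mp hω).le
      obtain ⟨F, hF1, hF2⟩ := good_finset (fun y => locT S t y ω) h0 (by positivity)
        (locT_sum hS t ω) hω'
      refine le_trans (lintegral_mono fun ζ => ?_)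
        (hC F (fun y => (locT S t y ω).toReal) (fun y => ENNReal.toReal_nonneg) hF1 hF2)
      refine QQ_le (Finset.sum_nonneg fun y _ =>
        mul_nonneg ENNReal.toReal_nonneg (hz.nonneg y ζ)) ?_
      rw [AF_eq_locT hS, ENNReal.ofReal_sum_of_nonneg fun y _ =>
        mul_nonneg ENNReal.toReal_nonneg (hz.nonneg y ζ)]
      refine le_trans (Finset.sum_le_sum fun y _ => ?_) (ENNReal.sum_le_tsum F)
      rw [mul_comm, ENNReal.ofReal_mul (hz.nonneg y ζ), ENNReal.ofReal_toReal
        (ne_top_of_le_ne_top ENNReal.ofReal_ne_top (locT_le hS t y ω))]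
      rfl
  calc ∫⁻ ζ, gg P S z ζ t ∂μ
      = ∫⁻ ω, ∫⁻ ζ, {ω | tl S t ω = 0}.indicator (fun ω => QQ (AF S (zf z ζ) t ω)) ω ∂μ ∂ P 0 := by
        unfold gg
        refine lintegral_lintegral_swap (Measurable.aemeasurable ?_)
        have : Measurable (({p : Ωz × Ω | tl S t p.2 = 0}).indicator
          (fun p => QQ (AF S (zf z p.1) t p.2))) :=
          (QQ_meas.comp hAm).indicator (measurable_snd hT)
        exact this
    _ ≤ ∫⁻ ω, B.indicator 1 ω + {ω | tl S t ω = 0}.indicator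
          (fun _ => ENNReal.ofReal (C * t ^ (-δ))) ω ∂ P 0 := by
        refine lintegral_mono fun ω => ?_
        by_cases hω : tl S t ω = 0
        · have hω' : ω ∈ {ω | tl S t ω = 0} := hω
          simp only [indicator_of_mem hω']
          exact key ω
        · have hω' : ω ∉ {ω | tl S t ω = 0} := hω
          simp only [indicator_of_notMem hω', lintegral_zero]
          exact zero_le
    _ = _ := by
        rw [lintegral_add_left (measurable_one.indicator hBm), lintegral_indicator_one hBm,
          lintegral_indicator_const hT]

lemma rpow_tail {K ρ : ℝ} (hK : 0 ≤ K) (hρ : 1 < ρ) :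
    ∫⁻ t : ℝ in Ioi 1, ENNReal.ofReal (K * t ^ (-ρ)) ≠ ⊤ := by
  have h := (integrableOn_Ioi_rpow_of_lt (show -ρ < -1 by linarith) zero_lt_one).const_mul K
  have e := ofReal_integral_eq_lintegral_ofReal h ?_
  · rw [← e]; exact ENNReal.ofReal_ne_top
  · filter_upwards [ae_restrict_mem measurableSet_Ioi] with t ht
    have : (1:ℝ) < t := ht
    positivity

lemma transient_core (hd : 1 ≤ d) (hz : IsScenery d α μ z) (hS : IsCTSRW (d + 1) P S)
    {β c : ℝ} (hβ0 : 0 < β) (hβ1 : β ≤ 1) (hc : 0 < c)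
    (hL : ∀ s, 0 ≤ s → ∀ y, mgf (z y) μ (-s) ≤ Real.exp (-(c * (min 1 s) ^ β)))
    {κ C' : ℝ} (hC' : 0 < C') (hq : ∀ t, 1 ≤ t → qq t ^ d ≤ C' * t ^ (-κ))
    (hκ : 1 < 9 / 20 + 1 / (20 * β) + κ) :
    ∀ᵐ ζ ∂μ, ∫⁻ t in Ioi 0, gg P S z ζ t ≠ ⊤ := by
  have := hS.prob 0
  have := hz.prob
  have hgm := gg_meas hz hS
  obtain ⟨C, hC, hA⟩ := annealed_F hz hβ0 hβ1 hc hL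
  obtain ⟨D, hD, hB⟩ := bad_prob hd hS
  set δ := 9 / 20 + 1 / (20 * β) with hδ
  have hm : Measurable fun ζ => ∫⁻ t in Ioi 0, gg P S z ζ t := hgm.lintegral_prod_right'
  have hfin : ∫⁻ ζ, (∫⁻ t in Ioi (0:ℝ), gg P S z ζ t) ∂μ ≠ ⊤ := by
    rw [lintegral_lintegral_swap hgm.aemeasurable]
    have hle1 : ∀ t, ∫⁻ ζ, gg P S z ζ t ∂μ ≤ 1 := by
      intro t
      have : ∀ ζ, gg P S z ζ t ≤ 1 := by
        intro ζ
        unfold gg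
        refine (lintegral_mono (g := fun _ => 1) fun ω => ?_).trans (by simp)
        exact (indicator_le_self' (fun _ _ => zero_le) ω).trans (QQ_le_one _)
      refine (lintegral_mono this).trans (by simp)
    rw [show Ioi (0 : ℝ) = Ioc 0 1 ∪ Ioi 1 from (Ioc_union_Ioi_eq_Ioi zero_le_one).symm]
    refine ne_top_of_le_ne_top ?_ (lintegral_union_le _ _ _)
    refine ENNReal.add_ne_top.mpr ⟨?_, ?_⟩
    · refine ne_top_of_le_ne_top ?_ (lintegral_mono hle1)
      simp
    · have hb : ∫⁻ t in Ioi 1, ∫⁻ ζ, gg P S z ζ t ∂μ ≤ ∫⁻ t in Ioi 1,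
          (ENNReal.ofReal (D * t ^ (-(6 / 5) : ℝ)) + ENNReal.ofReal (C * C' * t ^ (-(δ + κ)))) := by
        refine setLIntegral_mono' measurableSet_Ioi fun t ht => ?_
        have ht : 1 ≤ t := le_of_lt ht
        have h0 : 0 < t := by linarith
        refine (annealed_t hd hz hS ht (hA t ht)).trans (add_le_add (hB t ht) ?_)
        rw [prob_tl_zero hS h0.le, ← ENNReal.ofReal_mul (by positivity)]
        apply ENNReal.ofReal_le_ofReal
        calc _ ≤ C * t ^ (-δ) * (C' * t ^ (-κ)) := by gcongr; exact hq t ht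
          _ = C * C' * t ^ (-(δ + κ)) := by
            rw [show -(δ + κ) = -δ + -κ by ring, Real.rpow_add h0]; ring
      refine ne_top_of_le_ne_top ?_ hb
      rw [lintegral_add_left]
      · exact ENNReal.add_ne_top.mpr ⟨rpow_tail hD.le (by norm_num), rpow_tail (by positivity) hκ⟩
      · exact ((measurable_id.pow_const _).const_mul _).ennreal_ofReal
  filter_upwards [ae_lt_top hm hfin] with ζ hζ
  exact hζ.ne

lemma gg_eq (hd : 1 ≤ d) (hα : 0 < α) (hz : IsScenery d α μ z) (hS : IsCTSRW (d + 1) P S) :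
    ∀ᵐ ζ ∂μ, ∫⁻ t in Ioi 0, P 0 {ω | layeredWalk d z S t ζ ω = 0} =
      ∫⁻ t in Ioi 0, gg P S z ζ t := by
  filter_upwards [clock_finite hα hz hS] with ζ hζ
  refine setLIntegral_congr_fun measurableSet_Ioi fun t ht => ?_
  have ht : 0 ≤ t := le_of_lt ht
  beta_reduce
  rw [quenched_walk hd hS z hz.nonneg ht]
  unfold gg
  have hT : MeasurableSet {ω | tl S t ω = 0} := meas_tl hS t (measurableSet_singleton 0)
  rw [lintegral_indicator hT]
  refine lintegral_congr_ae (ae_restrict_of_ae ?_)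
  filter_upwards [hζ t] with ω hω
  have : AF S (zf z ζ) t ω ≠ ⊤ := hω.ne
  rw [QQ, if_neg this]
  rfl

lemma transient_d2 (hd : 2 ≤ d) (hα : 0 < α) (hz : IsScenery d α μ z) (hS : IsCTSRW (d + 1) P S) :
    ∀ᵐ ζ ∂μ, ∫⁻ t in Ioi 0, gg P S z ζ t ≠ ⊤ := by
  obtain ⟨c, hc, hL⟩ := laplace_gen hα hz
  obtain ⟨C, hC, h⟩ := qq_upper
  refine transient_core (by omega) hz hS zero_lt_one le_rfl hc hL (κ := 1) (C' := C ^ 2)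
    (by positivity) (fun t ht => ?_) (by norm_num)
  have h0 : 0 < t := by linarith
  calc qq t ^ d ≤ qq t ^ 2 := pow_le_pow_of_le_one (qq_nonneg t) (qq_le_one h0.le) hd
    _ ≤ (C * t ^ (-(1 / 2) : ℝ)) ^ 2 := by
      have := qq_nonneg t
      gcongr; exact h t h0
    _ = _ := by
      rw [mul_pow, ← Real.rpow_natCast (t ^ (-(1 / 2) : ℝ)), ← Real.rpow_mul h0.le]; norm_num

lemma transient_d1 (hd : d = 1) (hα : 0 < α) (hα1 : α < 1) (hz : IsScenery d α μ z)
    (hS : IsCTSRW (d + 1) P S) :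
    ∀ᵐ ζ ∂μ, ∫⁻ t in Ioi 0, gg P S z ζ t ≠ ⊤ := by
  obtain ⟨c, hc, hL⟩ := laplace_lt hα hz (β := (1 + α) / 2) (by linarith)
  obtain ⟨C, hC, h⟩ := qq_upper
  refine transient_core (by omega) hz hS (by linarith) (by linarith) hc hL (κ := 1 / 2) (C' := C)
    hC (fun t ht => ?_) ?_
  · rw [hd, pow_one]; exact h t (by linarith)
  · have : 1 / 20 < 1 / (20 * ((1 + α) / 2)) := by
      apply one_div_lt_one_div_of_lt <;> linarith
    linarith

end both

end

section
open MeasureTheory ProbabilityTheory Filter Set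
open scoped ENNReal

lemma qq_upper_sqrt : ∃ C > 0, ∀ s : ℝ, 0 < s → qq (s ^ 2) ≤ C / s := by
  obtain ⟨C, hC, h⟩ := qq_upper
  refine ⟨C, hC, fun s hs => (h _ (by positivity)).trans (le_of_eq ?_)⟩
  rw [← Real.rpow_natCast, ← Real.rpow_mul hs.le]
  norm_num [Real.rpow_neg_one]
  rfl

lemma qq_lower_sqrt : ∃ c > 0, ∀ s : ℝ, 1 ≤ s → c / s ≤ qq (s ^ 2) := by
  obtain ⟨C, hC, h⟩ := qq_lower
  refine ⟨C, hC, fun s hs => (le_of_eq ?_).trans (h _ (by nlinarith))⟩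
  rw [← Real.rpow_natCast, ← Real.rpow_mul (by linarith)]
  norm_num [Real.rpow_neg_one]
  rfl

lemma QQ_markov {a : ℝ≥0∞} {H : ℝ} (hH : 0 < H) :
    ENNReal.ofReal (qq H) ≤ QQ a + ENNReal.ofReal (qq H / H) * a := by
  by_cases h : a ≤ ENNReal.ofReal H
  · have ha : a ≠ ⊤ := ne_top_of_le_ne_top ENNReal.ofReal_ne_top h
    refine le_add_right ?_
    rw [QQ, if_neg ha]
    exact ENNReal.ofReal_le_ofReal (qq_anti ENNReal.toReal_nonneg
      (ENNReal.toReal_le_of_le_ofReal hH.le h))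
  · push Not at h
    refine le_add_left ?_
    calc ENNReal.ofReal (qq H) = ENNReal.ofReal (qq H / H) * ENNReal.ofReal H := by
          rw [← ENNReal.ofReal_mul (div_nonneg (qq_nonneg H) hH.le), div_mul_cancel₀ _ hH.ne']
      _ ≤ _ := by gcongr

section both
variable {d : ℕ} {α : ℝ} {Ωz : Type*} [MeasurableSpace Ωz] {μ : Measure Ωz}
  {z : (Fin d → ℤ) → Ωz → ℝ}
  {Ω : Type*} [MeasurableSpace Ω] {P : (Fin (d + 1) → ℤ) → Measure Ω}
  {S : ℝ → Ω → (Fin (d + 1) → ℤ)}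

noncomputable def hh (P : (Fin (d + 1) → ℤ) → Measure Ω) (S : ℝ → Ω → (Fin (d + 1) → ℤ))
    (z : (Fin d → ℤ) → Ωz → ℝ) (ζ : Ωz) (t : ℝ) : ℝ≥0∞ :=
  ∫⁻ ω, {ω | tl S t ω = 0}.indicator (fun ω => AF S (zf z ζ) t ω) ω ∂ P 0

lemma hh_meas0 (hz : IsScenery d α μ z) (hS : IsCTSRW (d + 1) P S) :
    Measurable ({q : (Ωz × ℝ) × Ω | tl S q.1.2 q.2 = 0}.indicator
      fun q => AF S (zf z q.1.1) q.1.2 q.2) := by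
  refine (AF_joint hz hS).indicator ?_
  have h3 : Measurable fun q : (Ωz × ℝ) × Ω => (q.1.2, q.2) :=
    (measurable_snd.comp measurable_fst).prodMk measurable_snd
  exact ((tl_meas hS.meas).comp h3) (measurableSet_singleton 0)

lemma hh_meas (hz : IsScenery d α μ z) (hS : IsCTSRW (d + 1) P S) :
    Measurable fun p : Ωz × ℝ => hh P S z p.1 p.2 := by
  have := hS.prob 0
  exact (hh_meas0 hz hS).lintegral_prod_right'

lemma AF_mean (hz : IsScenery d α μ z) (hS : IsCTSRW (d + 1) P S) (t : ℝ) (ω : Ω) :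
    ∫⁻ ζ, AF S (zf z ζ) t ω ∂μ = (∫⁻ ζ, ENNReal.ofReal (z 0 ζ) ∂μ) * ENNReal.ofReal t := by
  have := hz.prob
  unfold AF
  have h1 : Measurable fun p : Ωz × (Fin d → ℤ) => zf z p.1 p.2 :=
    measurable_from_prod_countable_left fun y => (hz.meas y).ennreal_ofReal
  have h2 : Measurable fun u : ℝ => tl S u ω :=
    (tl_meas hS.meas).comp (measurable_id.prodMk measurable_const)
  have h3 : Measurable fun p : Ωz × ℝ => zf z p.1 (tl S p.2 ω) :=
    h1.comp (measurable_fst.prodMk (h2.comp measurable_snd))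
  rw [lintegral_lintegral_swap h3.aemeasurable]
  have h4 : ∀ y, ∫⁻ ζ, zf z ζ y ∂μ = ∫⁻ ζ, ENNReal.ofReal (z 0 ζ) ∂μ := fun y =>
    ((hz.ident y).comp ENNReal.measurable_ofReal).lintegral_eq
  simp only [h4]
  simp

lemma hh_mean (hd : d = 1) (hz : IsScenery d α μ z) (hS : IsCTSRW (d + 1) P S) {t : ℝ}
    (ht : 0 ≤ t) :
    ∫⁻ ζ, hh P S z ζ t ∂μ = (∫⁻ ζ, ENNReal.ofReal (z 0 ζ) ∂μ) * ENNReal.ofReal t *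
      ENNReal.ofReal (qq t) := by
  have := hz.prob
  have := hS.prob 0
  have hT : MeasurableSet {ω | tl S t ω = 0} := meas_tl hS t (measurableSet_singleton 0)
  unfold hh
  rw [lintegral_lintegral_swap]
  · have : ∀ ω, ∫⁻ ζ, {ω | tl S t ω = 0}.indicator (fun ω => AF S (zf z ζ) t ω) ω ∂μ =
        {ω | tl S t ω = 0}.indicator (fun _ => (∫⁻ ζ, ENNReal.ofReal (z 0 ζ) ∂μ) *
          ENNReal.ofReal t) ω := by
      intro ω
      by_cases h : ω ∈ {ω | tl S t ω = 0}
      · simp only [indicator_of_mem h]; exact AF_mean hz hS t ω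
      · simp only [indicator_of_notMem h, lintegral_zero]
    simp only [this]
    have e : qq t ^ d = qq t := by rw [hd, pow_one]
    rw [lintegral_indicator_const hT, prob_tl_zero hS ht, e]
  · have h3 : Measurable fun q : Ωz × Ω => ((q.1, t), q.2) := by fun_prop
    exact ((hh_meas0 hz hS).comp h3).aemeasurable

/-- dyadic scale, square root -/
noncomputable def sc (n : ℕ) : ℝ := Real.sqrt (2 ^ n)

lemma sc_sq (n : ℕ) : sc n ^ 2 = 2 ^ n := Real.sq_sqrt (by positivity)
lemma sc_ge (n : ℕ) : 1 ≤ sc n := Real.one_le_sqrt.mpr (one_le_pow₀ (by norm_num))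

def blk (n : ℕ) : Set ℝ := Ioc (2 ^ n) (2 ^ (n + 1))

lemma blk_meas (n : ℕ) : MeasurableSet (blk n) := measurableSet_Ioc

lemma blk_vol (n : ℕ) : volume (blk n) = ENNReal.ofReal (sc n ^ 2) := by
  rw [blk, Real.volume_Ioc, sc_sq]; congr 1; ring

lemma blk_disj : Pairwise (Function.onFun Disjoint blk) := by
  have : Monotone fun n : ℕ => (2:ℝ) ^ n := fun a b h => pow_le_pow_right₀ (by norm_num) h
  exact this.pairwise_disjoint_on_Ioc_succ

lemma block_mean (hd : d = 1) (hz : IsScenery d α μ z) (hS : IsCTSRW (d + 1) P S) :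
    ∃ C : ℝ, 0 < C ∧ ∀ n, ∫⁻ ζ, (∫⁻ t in blk n, hh P S z ζ t) ∂μ ≤
      (∫⁻ ζ, ENNReal.ofReal (z 0 ζ) ∂μ) * ENNReal.ofReal C * ENNReal.ofReal (sc n ^ 3) := by
  have := hz.prob
  obtain ⟨C, hC, h⟩ := qq_upper_sqrt
  refine ⟨2 * C, by positivity, fun n => ?_⟩
  rw [lintegral_lintegral_swap (hh_meas hz hS).aemeasurable]
  have hs := sc_ge n
  have h0 : 0 < sc n := by linarith
  calc _ ≤ ∫⁻ t in blk n, (∫⁻ ζ, ENNReal.ofReal (z 0 ζ) ∂μ) * ENNReal.ofReal (2 * C * sc n) := by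
        refine setLIntegral_mono' (blk_meas n) fun t ht => ?_
        have h1 : sc n ^ 2 < t := by rw [sc_sq]; exact ht.1
        have h2 : t ≤ 2 * sc n ^ 2 := by rw [sc_sq]; have := ht.2; rw [pow_succ] at this; linarith
        have h3 : 0 < t := lt_trans (by positivity) h1
        rw [hh_mean hd hz hS h3.le, mul_assoc, ← ENNReal.ofReal_mul h3.le]
        refine mul_le_mul_right (ENNReal.ofReal_le_ofReal ?_) _
        have h4 : qq t ≤ C / sc n := (qq_anti (by positivity) h1.le).trans (h _ h0)
        calc t * qq t ≤ (2 * sc n ^ 2) * (C / sc n) := by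
              have := qq_nonneg t
              gcongr
          _ = _ := by field_simp
    _ = _ := by
        rw [setLIntegral_const, blk_vol, mul_assoc, ← ENNReal.ofReal_mul (by positivity),
          mul_assoc (∫⁻ ζ, ENNReal.ofReal (z 0 ζ) ∂μ), ← ENNReal.ofReal_mul (by positivity)]
        congr 2
        ring

lemma block_freq (hd : d = 1) (hz : IsScenery d α μ z) (hS : IsCTSRW (d + 1) P S)
    (hi : Integrable (z 0) μ) :
    ∀ᵐ ζ ∂μ, ∃ K : ℝ, ∃ᶠ n in atTop, ∫⁻ t in blk n, hh P S z ζ t ≤ ENNReal.ofReal (K * sc n ^ 3) := by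
  obtain ⟨C, hC, h⟩ := block_mean hd hz hS
  have hm : ∀ n, Measurable fun ζ => ∫⁻ t in blk n, hh P S z ζ t := fun n =>
    (hh_meas hz hS).lintegral_prod_right'
  set M := (∫⁻ ζ, ENNReal.ofReal (z 0 ζ) ∂μ) * ENNReal.ofReal C with hM
  have hMt : M ≠ ⊤ := ENNReal.mul_ne_top hi.lintegral_lt_top.ne ENNReal.ofReal_ne_top
  have hw0 : ∀ n, ENNReal.ofReal (sc n ^ 3) ≠ 0 := fun n => by
    have := sc_ge n
    rw [Ne, ENNReal.ofReal_eq_zero, not_le]; positivity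
  have hm' : ∀ n, Measurable fun ζ => (∫⁻ t in blk n, hh P S z ζ t) * (ENNReal.ofReal (sc n ^ 3))⁻¹ :=
    fun n => (hm n).mul_const _
  have hF := lintegral_liminf_le (μ := μ) (u := (atTop : Filter ℕ)) hm'
  have hF2 : ∫⁻ ζ, liminf (fun n => (∫⁻ t in blk n, hh P S z ζ t) * (ENNReal.ofReal (sc n ^ 3))⁻¹)
      atTop ∂μ ≤ M := by
    refine hF.trans ?_
    refine (liminf_le_liminf (v := fun _ => M) (Eventually.of_forall fun n => ?_)).trans (by simp)
    rw [lintegral_mul_const _ (hm n), ← div_eq_mul_inv]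
    exact ENNReal.div_le_of_le_mul (h n)
  filter_upwards [ae_lt_top (Measurable.liminf hm') (ne_top_of_le_ne_top hMt hF2)] with ζ hζ
  obtain ⟨K, hK1, hK2⟩ := ENNReal.lt_iff_exists_nnreal_btwn.mp hζ
  refine ⟨K, (frequently_lt_of_liminf_lt (by isBoundedDefault) hK1).mono fun n hn => ?_⟩
  rw [ENNReal.ofReal_mul K.coe_nonneg, ← ENNReal.div_le_iff (hw0 n) ENNReal.ofReal_ne_top, div_eq_mul_inv]
  simpa using hn.le

lemma block_markov (hd : d = 1) (hz : IsScenery d α μ z) (hS : IsCTSRW (d + 1) P S) (n : ℕ)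
    (ζ : Ωz) {H : ℝ} (hH : 0 < H) :
    ENNReal.ofReal (qq H) * (ENNReal.ofReal (qq (2 ^ (n + 1))) * ENNReal.ofReal (sc n ^ 2)) ≤
      (∫⁻ t in blk n, gg P S z ζ t) + ENNReal.ofReal (qq H / H) * ∫⁻ t in blk n, hh P S z ζ t := by
  have := hS.prob 0
  have hg1 : Measurable fun t => gg P S z ζ t := (gg_meas hz hS).comp measurable_prodMk_left
  have hh1 : Measurable fun t => hh P S z ζ t := (hh_meas hz hS).comp measurable_prodMk_left
  rw [← lintegral_const_mul _ hh1, ← lintegral_add_left hg1, ← blk_vol, ← mul_assoc,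
    ← setLIntegral_const]
  refine setLIntegral_mono' (blk_meas n) fun t ht => ?_
  have ht0 : 0 ≤ t := le_trans (by positivity) ht.1.le
  have hT : MeasurableSet {ω | tl S t ω = 0} := meas_tl hS t (measurableSet_singleton 0)
  have hA : Measurable fun ω => AF S (zf z ζ) t ω := AF_meas hS _ t
  calc _ ≤ ENNReal.ofReal (qq H) * ENNReal.ofReal (qq t) := by
        gcongr; exact qq_anti ht0 ht.2
    _ = ∫⁻ ω, {ω | tl S t ω = 0}.indicator (fun _ => ENNReal.ofReal (qq H)) ω ∂P 0 := by
        have e : qq t ^ d = qq t := by rw [hd, pow_one]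
        rw [lintegral_indicator_const hT, prob_tl_zero hS ht0, e]
    _ ≤ ∫⁻ ω, ({ω | tl S t ω = 0}.indicator (fun ω => QQ (AF S (zf z ζ) t ω)) ω +
          ENNReal.ofReal (qq H / H) * {ω | tl S t ω = 0}.indicator
            (fun ω => AF S (zf z ζ) t ω) ω) ∂P 0 := by
        refine lintegral_mono fun ω => ?_
        by_cases h : ω ∈ {ω | tl S t ω = 0}
        · simp only [indicator_of_mem h]; exact QQ_markov hH
        · simp only [indicator_of_notMem h]; exact zero_le
    _ = _ := by
        have e := (QQ_meas.comp hA).indicator hT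
        simp only [Function.comp_def] at e
        rw [lintegral_add_left e, lintegral_const_mul _
          (hA.indicator hT)]
        rfl

lemma block_low (hd : d = 1) (hz : IsScenery d α μ z) (hS : IsCTSRW (d + 1) P S) (K : ℝ) :
    ∃ ε > 0, ∀ n ζ, ∫⁻ t in blk n, hh P S z ζ t ≤ ENNReal.ofReal (K * sc n ^ 3) →
      ENNReal.ofReal ε ≤ ∫⁻ t in blk n, gg P S z ζ t := by
  obtain ⟨c, hc, hl⟩ := qq_lower_sqrt
  -- `qq (2^(n+1)) * 2^n ≥ c1 * sc n`
  set c1 := c / 2 with hc1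
  have h2 : ∀ n, c1 * sc n ≤ qq (2 ^ (n + 1)) * sc n ^ 2 := by
    intro n
    have h0 := sc_ge n
    have h1 : c / (2 * sc n) ≤ qq (2 ^ (n + 1)) := by
      refine (hl (2 * sc n) (by linarith)).trans (qq_anti (by positivity) ?_)
      rw [mul_pow, sc_sq, pow_succ]
      have : (0:ℝ) < 2 ^ n := by positivity
      linarith
    calc c1 * sc n = c / (2 * sc n) * sc n ^ 2 := by rw [hc1]; field_simp
      _ ≤ _ := by gcongr
  have hc1p : 0 < c1 := by positivity
  -- choice of the scale b
  obtain ⟨b, hb1, hbK⟩ : ∃ b : ℝ, 1 ≤ b ∧ 2 * K ≤ c1 * b ^ 2 := by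
    refine ⟨max 1 (2 * K / c1), le_max_left _ _, ?_⟩
    set b := max 1 (2 * K / c1)
    have e1 : 1 ≤ b := le_max_left _ _
    have e2 : 2 * K / c1 ≤ b := le_max_right _ _
    rw [div_le_iff₀ hc1p] at e2
    nlinarith [mul_nonneg hc1p.le (mul_nonneg (show 0 ≤ b by linarith) (show 0 ≤ b - 1 by linarith))]
  refine ⟨c / b * c1 / 2, by positivity, fun n ζ hn => ?_⟩
  have h0 := sc_ge n
  have hs : 0 < sc n := by linarith
  have hbs : 1 ≤ b * sc n := by nlinarith
  have hH : 0 < (b * sc n) ^ 2 := by positivity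
  set H := (b * sc n) ^ 2 with hHd
  have hq := hl _ hbs
  rw [← hHd] at hq
  have hqn := qq_nonneg H
  have hM := block_markov hd hz hS n ζ hH
  have h3 : ENNReal.ofReal (qq H * (c1 * sc n)) ≤
      (∫⁻ t in blk n, gg P S z ζ t) + ENNReal.ofReal (qq H * (c1 * sc n) / 2) := by
    calc _ ≤ ENNReal.ofReal (qq H) * (ENNReal.ofReal (qq (2 ^ (n + 1))) *
            ENNReal.ofReal (sc n ^ 2)) := by
          rw [← ENNReal.ofReal_mul (qq_nonneg _), ← ENNReal.ofReal_mul hqn]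
          exact ENNReal.ofReal_le_ofReal (mul_le_mul_of_nonneg_left (h2 n) hqn)
      _ ≤ _ := hM
      _ ≤ _ := by
          gcongr
          refine (mul_le_mul_right hn _).trans ?_
          rw [← ENNReal.ofReal_mul (by positivity)]
          apply ENNReal.ofReal_le_ofReal
          calc qq H / H * (K * sc n ^ 3) = qq H * sc n * (K / b ^ 2) := by
                rw [hHd]; field_simp
            _ ≤ qq H * sc n * (c1 / 2) := by
                refine mul_le_mul_of_nonneg_left ?_ (by positivity)
                rw [div_le_iff₀ (by positivity)]; linarith
            _ = _ := by ring
  have h4 : ENNReal.ofReal (qq H * (c1 * sc n) - qq H * (c1 * sc n) / 2) ≤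
      ∫⁻ t in blk n, gg P S z ζ t := by
    rw [ENNReal.ofReal_sub _ (by positivity)]
    exact tsub_le_iff_right.mpr h3
  refine le_trans (ENNReal.ofReal_le_ofReal ?_) h4
  calc c / b * c1 / 2 = c / (b * sc n) * (c1 * sc n) / 2 := by field_simp
    _ ≤ qq H * (c1 * sc n) / 2 := by gcongr
    _ = _ := by ring

lemma recurrent_d1 (hd : d = 1) (hz : IsScenery d α μ z) (hS : IsCTSRW (d + 1) P S)
    (hi : Integrable (z 0) μ) :
    ∀ᵐ ζ ∂μ, ∫⁻ t in Ioi 0, gg P S z ζ t = ⊤ := by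
  filter_upwards [block_freq hd hz hS hi] with ζ hζ
  obtain ⟨K, hK⟩ := hζ
  obtain ⟨ε, hε, hlow⟩ := block_low hd hz hS K
  by_contra hne
  have hsum : ∑' n, ∫⁻ t in blk n, gg P S z ζ t ≠ ⊤ := by
    rw [← lintegral_iUnion blk_meas blk_disj]
    refine ne_top_of_le_ne_top hne (lintegral_mono_set ?_)
    refine iUnion_subset fun n t ht => ?_
    exact lt_trans (by positivity) ht.1
  have ht := ENNReal.tendsto_atTop_zero_of_tsum_ne_top hsum
  have hev := ht.eventually_lt_const (ENNReal.ofReal_pos.mpr hε)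
  obtain ⟨n, h1, h2⟩ := (hK.and_eventually hev).exists
  exact absurd (hlow n ζ h1) (not_le.mpr h2)

end both

end

/-- Theorem (transience/recurrence of the layered random conductance walk): ℙ-a.s.,
the Green integral `∫₀^∞ P₀^ω(X_t = 0) dt` is finite when `d ≥ 2`, finite when `d = 1`
and `α < 1`, and infinite when `d = 1` and `𝔼[z(0)] < ∞`. -/
theorem stmt7 (d : ℕ) (hd : 1 ≤ d) (α : ℝ) (hα : 0 < α)
    {Ωz Ωw : Type*} [MeasurableSpace Ωz] [MeasurableSpace Ωw]
    (μ : Measure Ωz) (z : (Fin d → ℤ) → Ωz → ℝ) (hz : IsScenery d α μ z)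
    (P : (Fin (d + 1) → ℤ) → Measure Ωw) (S : ℝ → Ωw → (Fin (d + 1) → ℤ))
    (hS : IsCTSRW (d + 1) P S) :
    ∀ᵐ ζ ∂ μ,
      (2 ≤ d →
        (∫⁻ t in Set.Ioi (0 : ℝ), (P 0) {ω | layeredWalk d z S t ζ ω = 0}) ≠ ⊤) ∧
      (d = 1 → α < 1 →
        (∫⁻ t in Set.Ioi (0 : ℝ), (P 0) {ω | layeredWalk d z S t ζ ω = 0}) ≠ ⊤) ∧
      (d = 1 → Integrable (z 0) μ →
        (∫⁻ t in Set.Ioi (0 : ℝ), (P 0) {ω | layeredWalk d z S t ζ ω = 0}) = ⊤) := by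
  have h1 := gg_eq (μ := μ) (P := P) hd hα hz hS
  have h2 : ∀ᵐ ζ ∂ μ, 2 ≤ d → ∫⁻ t in Set.Ioi (0 : ℝ), gg P S z ζ t ≠ ⊤ := by
    by_cases h : 2 ≤ d
    · filter_upwards [transient_d2 h hα hz hS] with ζ hζ _ using hζ
    · exact Eventually.of_forall fun _ h' => absurd h' h
  have h3 : ∀ᵐ ζ ∂ μ, d = 1 → α < 1 → ∫⁻ t in Set.Ioi (0 : ℝ), gg P S z ζ t ≠ ⊤ := by
    by_cases h : d = 1 ∧ α < 1
    · filter_upwards [transient_d1 h.1 hα h.2 hz hS] with ζ hζ _ _ using hζ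
    · exact Eventually.of_forall fun _ h' h'' => absurd ⟨h', h''⟩ h
  have h4 : ∀ᵐ ζ ∂ μ, d = 1 → Integrable (z 0) μ →
      ∫⁻ t in Set.Ioi (0 : ℝ), gg P S z ζ t = ⊤ := by
    by_cases h : d = 1 ∧ Integrable (z 0) μ
    · filter_upwards [recurrent_d1 h.1 hz hS h.2] with ζ hζ _ _ using hζ
    · exact Eventually.of_forall fun _ h' h'' => absurd ⟨h', h''⟩ h
  filter_upwards [h1, h2, h3, h4] with ζ e a b c
  rw [e]
  exact ⟨a, b, c⟩
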